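/- arXiv:1505.05531 — 6 statements merged into one kernel-verified Lean document; each statement's English description precedes it below -/
import Mathlib

section
/- (Kneser–Lovász theorem) Let n ≥ 2k > 1. The (n,k)-Kneser graph has no proper coloring with n − 2k + 1 colors; that is, there is no map c from the k-element subsets of {1,…,n} to {1,…,n−2k+1} such that disjoint k-subsets always receive different colors. -/
/-!
The proof follows Matoušek: a proper coloring of the Kneser graph with few colors would label the
nonzero sign vectors in `{+, -, 0}ⁿ`, antipodally, by nonzero integers with fewer than `n` absolute
values, so that no `v` and `w` with `v` a face of `w` get opposite labels. This contradicts
Tucker's lemma for the octahedral sphere.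

Tucker's lemma in turn follows from Fan's parity theorem: an odd number of the maximal chains of
nonzero sign vectors carry labels that, ordered by absolute value, have signs `+, -, +, …`; such a
chain exhibits `n` distinct absolute values. The parity is computed by induction on the dimension
`d`. Antipodality reduces the count over the `d`-sphere to chains in its upper hemisphere with
alternating labels starting with either sign. Such a chain has an odd number of facets with
alternating labels starting with `+`, and every other chain an even number. Counting incidences from
the side of the facets, the interior ones cancel in pairs and those on the equator remain.
-/

namespace KneserLovasz

open Finset

section Alternating

/-- The integers in the multiset have distinct absolute values and, listed by increasing absolute
value, signs `+, -, +, …`. The tail of such a list is negated so that it starts with `+` again. -/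
inductive IsAlternating : Multiset ℤ → Prop
  | zero : IsAlternating 0
  | cons {a : ℤ} {M : Multiset ℤ} (pos : 0 < a) (lt : ∀ b ∈ M, a.natAbs < b.natAbs)
      (tail : IsAlternating (M.map Neg.neg)) : IsAlternating (a ::ₘ M)

theorem isAlternating_cons_iff {a : ℤ} {M : Multiset ℤ} (h : ∀ b ∈ M, a.natAbs < b.natAbs) :
    IsAlternating (a ::ₘ M) ↔ 0 < a ∧ IsAlternating (M.map Neg.neg) := by
  refine ⟨fun hM => ?_, fun ⟨ha, hM⟩ => .cons ha h hM⟩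
  generalize hN : a ::ₘ M = N at hM
  cases hM with
  | zero => exact absurd hN Multiset.cons_ne_zero
  | cons hb hlt htail =>
    rcases Multiset.cons_eq_cons.1 hN with ⟨rfl, rfl⟩ | ⟨-, K, rfl, rfl⟩
    · exact ⟨hb, htail⟩
    · exact absurd (h _ (Multiset.mem_cons_self _ _)) (hlt _ (Multiset.mem_cons_self _ _)).asymm

theorem IsAlternating.nodup_map_natAbs {M : Multiset ℤ} (hM : IsAlternating M) :
    (M.map Int.natAbs).Nodup := by
  induction hM with
  | zero => exact Multiset.nodup_zero
  | cons _ hlt _ ih =>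
    rw [Multiset.map_map] at ih
    rw [Multiset.map_cons, Multiset.nodup_cons]
    refine ⟨fun hmem => ?_, by simpa [Function.comp_def] using ih⟩
    obtain ⟨b, hb, hba⟩ := Multiset.mem_map.1 hmem
    exact (hlt b hb).ne' hba

variable {ι : Type*} {T : Finset ι} {x : ι → ℤ}

theorem IsAlternating.injOn_natAbs (h : IsAlternating (T.val.map x)) :
    Set.InjOn (fun i => (x i).natAbs) T := by
  have hnodup := h.nodup_map_natAbs
  rw [Multiset.map_map] at hnodup
  exact fun i hi j hj => Multiset.inj_on_of_nodup_map hnodup i hi j hj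

open Classical in
/-- The indicator of `IsAlternating` in `ZMod 2`, so that sums of it count modulo two. -/
noncomputable def alternatingIndicator (M : Multiset ℤ) : ZMod 2 :=
  if IsAlternating M then 1 else 0

theorem alternatingIndicator_ne_zero {M : Multiset ℤ} :
    alternatingIndicator M ≠ 0 ↔ IsAlternating M := by
  simp [alternatingIndicator]

theorem alternatingIndicator_zero : alternatingIndicator 0 = 1 :=
  if_pos .zero

theorem alternatingIndicator_cons {a : ℤ} {M : Multiset ℤ} (h : ∀ b ∈ M, a.natAbs < b.natAbs) :
    alternatingIndicator (a ::ₘ M)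
      = if 0 < a then alternatingIndicator (M.map Neg.neg) else 0 := by
  classical
  unfold alternatingIndicator
  rw [← ite_and]
  exact if_congr (isAlternating_cons_iff h) rfl rfl

theorem alternatingIndicator_map_eq_zero {i j : ι} (hi : i ∈ T) (hj : j ∈ T) (hij : i ≠ j)
    (hx : (x i).natAbs = (x j).natAbs) : alternatingIndicator (T.val.map x) = 0 :=
  if_neg fun h => hij (h.injOn_natAbs hi hj hx)

variable [DecidableEq ι]

theorem sum_alternatingIndicator_erase_of_eq {i j : ι} (hi : i ∈ T) (hj : j ∈ T) (hij : i ≠ j)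
    (hx : x i = x j) : ∑ t ∈ T, alternatingIndicator ((T.erase t).val.map x) = 0 := by
  have hrest : ∀ t ∈ T, t ≠ i ∧ t ≠ j → alternatingIndicator ((T.erase t).val.map x) = 0 :=
    fun t _ ht => alternatingIndicator_map_eq_zero (mem_erase.2 ⟨ht.1.symm, hi⟩)
      (mem_erase.2 ⟨ht.2.symm, hj⟩) hij (congrArg Int.natAbs hx)
  have herase : (T.erase i).val.map x = (T.erase j).val.map x := by
    rw [erase_val, erase_val, Multiset.map_erase_of_mem _ _ hi, Multiset.map_erase_of_mem _ _ hj,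
      hx]
  rw [sum_eq_add_of_mem i j hi hj hij hrest, herase, CharTwo.add_self_eq_zero]

theorem sum_alternatingIndicator_erase_insert {i : ι} (hi : i ∉ T) (hxi : x i ≠ 0)
    (hlt : ∀ j ∈ T, (x i).natAbs < (x j).natAbs)
    (ih : ∑ t ∈ T, alternatingIndicator (((T.erase t).val.map x).map Neg.neg)
      = alternatingIndicator (T.val.map x) + alternatingIndicator ((T.val.map x).map Neg.neg)) :
    ∑ t ∈ insert i T, alternatingIndicator (((insert i T).erase t).val.map x)
      = alternatingIndicator ((insert i T).val.map x)
        + alternatingIndicator (((insert i T).val.map x).map Neg.neg) := by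
  have hterm : ∀ t ∈ T, alternatingIndicator (((insert i T).erase t).val.map x)
      = if 0 < x i then alternatingIndicator (((T.erase t).val.map x).map Neg.neg) else 0 := by
    intro t ht
    rw [erase_insert_of_ne fun h : i = t => hi (h ▸ ht),
      insert_val_of_notMem fun h => hi (mem_of_mem_erase h), Multiset.map_cons,
      alternatingIndicator_cons
        (Multiset.forall_mem_map_iff.2 fun j hj => hlt j (mem_of_mem_erase hj))]
  have hpos : alternatingIndicator ((insert i T).val.map x)
      = if 0 < x i then alternatingIndicator ((T.val.map x).map Neg.neg) else 0 := by
    rw [insert_val_of_notMem hi, Multiset.map_cons,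
      alternatingIndicator_cons (Multiset.forall_mem_map_iff.2 hlt)]
  have hneg : alternatingIndicator (((insert i T).val.map x).map Neg.neg)
      = if x i < 0 then alternatingIndicator (T.val.map x) else 0 := by
    rw [insert_val_of_notMem hi, Multiset.map_cons, Multiset.map_cons,
      alternatingIndicator_cons (by simpa using hlt)]
    simp
  rw [sum_insert hi, erase_insert hi, sum_congr rfl hterm, hpos, hneg]
  rcases hxi.lt_or_gt with hx | hx
  · simp [hx, hx.asymm]
  · simp only [hx, hx.asymm, if_true, if_false, ih, ← add_assoc, CharTwo.add_self_eq_zero,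
      zero_add, add_zero]

theorem sum_alternatingIndicator_erase (hx : ∀ i ∈ T, ∀ j ∈ T, x i ≠ -x j) :
    ∑ t ∈ T, alternatingIndicator ((T.erase t).val.map x)
      = alternatingIndicator (T.val.map x) + alternatingIndicator ((T.val.map x).map Neg.neg) := by
  induction T using Finset.strongInduction generalizing x with
  | H T ih =>
  rcases T.eq_empty_or_nonempty with rfl | hT
  · simp [CharTwo.add_self_eq_zero]
  obtain ⟨i, hi, hmin⟩ := T.exists_min_image (fun t => (x t).natAbs) hT
  have hxi : x i ≠ 0 := fun h => hx i hi i hi (by simp [h])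
  by_cases hlt : ∀ j ∈ T.erase i, (x i).natAbs < (x j).natAbs
  · have hrec := @ih (T.erase i) (erase_ssubset hi) (fun t => -x t) fun s hs t ht h =>
      hx s (mem_of_mem_erase hs) t (mem_of_mem_erase ht) (neg_injective h)
    have := sum_alternatingIndicator_erase_insert (notMem_erase i T) hxi hlt
      (by simpa [Function.comp_def, add_comm] using hrec)
    rwa [insert_erase hi] at this
  · push Not at hlt
    obtain ⟨j, hj, hji⟩ := hlt
    obtain ⟨hji_ne, hjT⟩ := mem_erase.1 hj
    have habs : (x i).natAbs = (x j).natAbs := (hmin j hjT).antisymm hji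
    have hxij : x i = x j := (Int.natAbs_eq_natAbs_iff.1 habs).resolve_right (hx i hi j hjT)
    have hneg : alternatingIndicator ((T.val.map x).map Neg.neg) = 0 := by
      rw [Multiset.map_map]
      exact alternatingIndicator_map_eq_zero hi hjT hji_ne.symm (by simpa using habs)
    rw [sum_alternatingIndicator_erase_of_eq hi hjT hji_ne.symm hxij,
      alternatingIndicator_map_eq_zero hi hjT hji_ne.symm habs, hneg, add_zero]

end Alternating

section Tucker

/-- The face order on sign vectors: `v` is obtained from `w` by replacing some entries by zero. The
nonzero sign vectors are the faces of the boundary of the cross-polytope. -/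
def IsFace {ι : Type*} (v w : ι → SignType) : Prop :=
  ∀ j, v j ≠ 0 → w j = v j

theorem IsFace.ne_zero {ι : Type*} {v w : ι → SignType} (h : IsFace v w) (hv : v ≠ 0) :
    w ≠ 0 := by
  obtain ⟨j, hj⟩ := Function.ne_iff.1 hv
  exact fun hw => hj ((h j hj).symm.trans (congrFun hw j))

/-- The hypotheses of Tucker's lemma: an antipodal labeling of the nonzero sign vectors in which
comparable vectors never carry opposite labels. The value at the zero vector is irrelevant. -/
structure IsTuckerLabeling {ι : Type*} (lam : (ι → SignType) → ℤ) : Prop where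
  map_neg : ∀ v, v ≠ 0 → lam (-v) = -lam v
  ne_neg_of_isFace : ∀ v w, v ≠ 0 → IsFace v w → lam v ≠ -lam w

/-- Signed permutations, which encode the maximal chains of nonzero sign vectors: `(σ, ε)` stands
for the chain in which the entries `σ 0, σ 1, …` become nonzero in turn, entry `j` taking the sign
`ε j`. -/
abbrev SignedPerm (n : ℕ) : Type :=
  Equiv.Perm (Fin n) × (Fin n → ℤˣ)

variable {n : ℕ}

/-- The `i`-th member of the chain encoded by `p`, counted from zero: it has `i + 1` nonzero entries
if `i < n`. -/
noncomputable def flag (p : SignedPerm n) (i : ℕ) : Fin n → SignType :=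
  fun j => if (p.1.symm j : ℕ) ≤ i then SignType.sign (p.2 j : ℤ) else 0

theorem isFace_flag (p : SignedPerm n) {i j : ℕ} (hij : i ≤ j) :
    IsFace (flag p i) (flag p j) := by
  intro t ht
  have hti : (p.1.symm t : ℕ) ≤ i := by
    by_contra h
    exact ht (if_neg h)
  rw [flag, flag, if_pos hti, if_pos (hti.trans hij)]

theorem flag_ne_zero (hn : 0 < n) (p : SignedPerm n) (i : ℕ) : flag p i ≠ 0 := by
  intro h
  have := congrFun h (p.1 ⟨0, hn⟩)
  simp [flag, sign_eq_zero_iff] at this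

/-- The labels of the members of the chain encoded by `p` with index in `T`. -/
noncomputable def flagLabels (lam : (Fin n → SignType) → ℤ) (p : SignedPerm n) (T : Finset ℕ) :
    Multiset ℤ :=
  T.val.map fun i => lam (flag p i)

theorem flagLabels_congr (lam : (Fin n → SignType) → ℤ) {p q : SignedPerm n} {T : Finset ℕ}
    (h : ∀ i ∈ T, flag p i = flag q i) : flagLabels lam p T = flagLabels lam q T :=
  Multiset.map_congr rfl fun i hi => congrArg lam (h i hi)

theorem IsTuckerLabeling.ne_neg_flag {lam : (Fin n → SignType) → ℤ} (hlam : IsTuckerLabeling lam)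
    (hn : 0 < n) (p : SignedPerm n) (i j : ℕ) : lam (flag p i) ≠ -lam (flag p j) := by
  rcases le_total i j with hij | hji
  · exact hlam.ne_neg_of_isFace _ _ (flag_ne_zero hn p i) (isFace_flag p hij)
  · exact fun h => hlam.ne_neg_of_isFace _ _ (flag_ne_zero hn p j) (isFace_flag p hji)
      (neg_eq_iff_eq_neg.2 h).symm

/-- Signed permutations that fix all entries from `a` on and have sign `+` from `b` on. Their first
`a` members form the maximal chains of the sign vectors supported on the first `a` entries if
`b = a`, and of the upper hemisphere of these, where the last entry is not negative, if
`a = b + 1`. -/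
def signedPerms (n a b : ℕ) : Finset (SignedPerm n) :=
  {p | (∀ j : Fin n, a ≤ j → p.1 j = j) ∧ ∀ j : Fin n, b ≤ j → p.2 j = 1}

theorem mem_signedPerms {a b : ℕ} {p : SignedPerm n} : p ∈ signedPerms n a b ↔
    (∀ j : Fin n, a ≤ j → p.1 j = j) ∧ ∀ j : Fin n, b ≤ j → p.2 j = 1 := by
  simp [signedPerms]

theorem signedPerms_zero_zero : signedPerms n 0 0 = {1} := by
  ext p
  simp [mem_signedPerms, Prod.ext_iff, Equiv.ext_iff, funext_iff]

theorem forall_succ_le_and_iff {P : Fin n → Prop} {d : ℕ} (hd : d < n) :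
    ((∀ j : Fin n, d + 1 ≤ j → P j) ∧ P ⟨d, hd⟩) ↔ ∀ j : Fin n, d ≤ j → P j := by
  refine ⟨fun ⟨hP, hPd⟩ j hj => ?_, fun h => ⟨fun j hj => h j (by omega), h _ le_rfl⟩⟩
  rcases hj.eq_or_lt with rfl | hj
  · exact hPd
  · exact hP j hj

theorem filter_apply_eq_signedPerms {d b : ℕ} (hd : d < n) :
    {p ∈ signedPerms n (d + 1) b | p.1 ⟨d, hd⟩ = ⟨d, hd⟩} = signedPerms n d b := by
  ext p
  rw [mem_filter, mem_signedPerms, mem_signedPerms, and_right_comm,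
    forall_succ_le_and_iff (P := fun j => p.1 j = j)]

theorem filter_sign_eq_one_signedPerms {a d : ℕ} (hd : d < n) :
    {p ∈ signedPerms n a (d + 1) | p.2 ⟨d, hd⟩ = 1} = signedPerms n a d := by
  ext p
  rw [mem_filter, mem_signedPerms, mem_signedPerms, and_assoc,
    forall_succ_le_and_iff (P := fun j => p.2 j = 1)]

variable (lam : (Fin n → SignType) → ℤ)

/-- The chain obtained by exchanging the entries that become nonzero at steps `i` and `i + 1`, which
changes only its `i`-th member. -/
def swapAdjacent (p : SignedPerm n) {i : ℕ} (hi : i + 1 < n) : SignedPerm n :=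
  (p.1 * Equiv.swap ⟨i, by omega⟩ ⟨i + 1, hi⟩, p.2)

theorem flag_swapAdjacent (p : SignedPerm n) {i t : ℕ} (hi : i + 1 < n) (ht : t ≠ i) :
    flag (swapAdjacent p hi) t = flag p t := by
  funext j
  have hsymm : (swapAdjacent p hi).1.symm j
      = Equiv.swap ⟨i, by omega⟩ ⟨i + 1, hi⟩ (p.1.symm j) := rfl
  have hle : ((swapAdjacent p hi).1.symm j : ℕ) ≤ t ↔ (p.1.symm j : ℕ) ≤ t := by
    rw [hsymm, Equiv.swap_apply_def]
    split_ifs with h h' <;> simp only [*] <;> omega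
  exact if_congr hle rfl rfl

theorem sum_flagLabels_eq_zero_of_notMem {a b i : ℕ} (hia : i + 1 < a) (han : a ≤ n)
    {T : Finset ℕ} (hT : i ∉ T) :
    ∑ p ∈ signedPerms n a b, alternatingIndicator (flagLabels lam p T) = 0 := by
  have hi : i + 1 < n := hia.trans_le han
  refine sum_involution (fun p _ => swapAdjacent p hi) (fun p _ => ?_) (fun p _ _ h => ?_)
    (fun p hp => ?_) (fun p _ => by simp [swapAdjacent, mul_assoc])
  · rw [flagLabels_congr lam fun t ht => flag_swapAdjacent p hi (ne_of_mem_of_not_mem ht hT),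
      CharTwo.add_self_eq_zero]
  · have hone := mul_eq_left.1 (congrArg Prod.fst h)
    simp [Equiv.swap_eq_one_iff] at hone
  · rw [mem_signedPerms] at hp ⊢
    refine ⟨fun j hj => ?_, hp.2⟩
    rw [swapAdjacent, Equiv.Perm.mul_apply, Equiv.swap_apply_of_ne_of_ne, hp.1 j hj] <;>
      simp only [ne_eq, Fin.ext_iff] <;> omega

/-- The chain obtained by reversing the sign of the entry that becomes nonzero at step `i`. -/
def flipSign (p : SignedPerm n) (i : Fin n) : SignedPerm n :=
  (p.1, Function.update p.2 (p.1 i) (-p.2 (p.1 i)))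

theorem flag_flipSign (p : SignedPerm n) (i : Fin n) {t : ℕ} (ht : t < i) :
    flag (flipSign p i) t = flag p t := by
  funext j
  by_cases hj : (p.1.symm j : ℕ) ≤ t
  · have hne : j ≠ p.1 i := by
      rintro rfl
      rw [Equiv.symm_apply_apply] at hj
      omega
    simp only [flag, flipSign, Function.update_of_ne hne]
  · exact (if_neg hj).trans (if_neg hj).symm

theorem sum_flagLabels_filter_apply_ne_eq_zero {d : ℕ} (hd : d < n) {T : Finset ℕ}
    (hT : ∀ t ∈ T, t < d) :
    ∑ p ∈ signedPerms n (d + 1) d with p.1 ⟨d, hd⟩ ≠ ⟨d, hd⟩,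
      alternatingIndicator (flagLabels lam p T) = 0 := by
  refine sum_involution (fun p _ => flipSign p ⟨d, hd⟩) (fun p _ => ?_) (fun p _ _ h => ?_)
    (fun p hp => ?_) (fun p _ => by simp [flipSign])
  · rw [flagLabels_congr lam fun t ht => flag_flipSign p ⟨d, hd⟩ (hT t ht),
      CharTwo.add_self_eq_zero]
  · have := congrFun (congrArg Prod.snd h) (p.1 ⟨d, hd⟩)
    simp [flipSign, neg_units_ne_self] at this
  · rw [mem_filter, mem_signedPerms] at hp ⊢
    obtain ⟨⟨hfix, hsign⟩, hne⟩ := hp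
    have hlt : (p.1 ⟨d, hd⟩ : ℕ) < d := by
      by_contra! hle
      have hval : (p.1 ⟨d, hd⟩ : ℕ) ≠ d := fun h => hne (Fin.ext h)
      exact hne (p.1.injective (hfix _ (by omega)))
    refine ⟨⟨hfix, fun j hj => ?_⟩, hne⟩
    have hj_ne : j ≠ p.1 ⟨d, hd⟩ := by
      rintro rfl
      omega
    exact (Function.update_of_ne hj_ne _ _).trans (hsign j hj)

theorem sum_flagLabels_signedPerms_succ {d : ℕ} (hd : d < n) {T : Finset ℕ}
    (hT : ∀ t ∈ T, t < d) :
    ∑ p ∈ signedPerms n (d + 1) d, alternatingIndicator (flagLabels lam p T)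
      = ∑ p ∈ signedPerms n d d, alternatingIndicator (flagLabels lam p T) := by
  rw [← sum_filter_add_sum_filter_not _ fun p : SignedPerm n => p.1 ⟨d, hd⟩ = ⟨d, hd⟩,
    sum_flagLabels_filter_apply_ne_eq_zero lam hd hT, add_zero, filter_apply_eq_signedPerms]

/-- The chain reflected in the entries `0, …, d`, which is the antipodal map on sign vectors
supported on those entries. -/
def negUpTo (d : ℕ) (p : SignedPerm n) : SignedPerm n :=
  (p.1, fun j => if (j : ℕ) ≤ d then -p.2 j else p.2 j)

theorem negUpTo_negUpTo (d : ℕ) (p : SignedPerm n) : negUpTo d (negUpTo d p) = p := by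
  refine Prod.ext rfl (funext fun j => ?_)
  simp only [negUpTo]
  split_ifs <;> simp

theorem flag_negUpTo {d i : ℕ} {p : SignedPerm n} (hp : ∀ j : Fin n, d + 1 ≤ j → p.1 j = j)
    (hi : i ≤ d) : flag (negUpTo d p) i = -flag p i := by
  funext j
  by_cases hj : (p.1.symm j : ℕ) ≤ i
  · have hjd : (j : ℕ) ≤ d := by
      by_contra! hlt
      rw [p.1.symm_apply_eq.2 (hp j hlt).symm] at hj
      omega
    simp [flag, negUpTo, hj, hjd, Left.sign_neg]
  · simp [flag, negUpTo, hj]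

variable {lam}

theorem IsTuckerLabeling.flagLabels_negUpTo (hlam : IsTuckerLabeling lam) {d : ℕ} (hd : d < n)
    {p : SignedPerm n} (hp : ∀ j : Fin n, d + 1 ≤ j → p.1 j = j) :
    flagLabels lam (negUpTo d p) (range (d + 1))
      = (flagLabels lam p (range (d + 1))).map Neg.neg := by
  rw [flagLabels, flagLabels, Multiset.map_map]
  refine Multiset.map_congr rfl fun i hi => ?_
  rw [flag_negUpTo hp (Nat.lt_succ_iff.1 (mem_range.1 hi)),
    hlam.map_neg _ (flag_ne_zero (by omega) p i), Function.comp_apply]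

theorem IsTuckerLabeling.sum_map_neg_flagLabels (hlam : IsTuckerLabeling lam) {d : ℕ}
    (hd : d < n) :
    ∑ p ∈ signedPerms n (d + 1) d,
        alternatingIndicator ((flagLabels lam p (range (d + 1))).map Neg.neg)
      = ∑ p ∈ signedPerms n (d + 1) (d + 1) with p.2 ⟨d, hd⟩ ≠ 1,
        alternatingIndicator (flagLabels lam p (range (d + 1))) := by
  refine sum_nbij' (negUpTo d) (negUpTo d) (fun p hp => ?_) (fun p hp => ?_)
    (fun p _ => negUpTo_negUpTo d p) (fun p _ => negUpTo_negUpTo d p) (fun p hp => ?_)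
  · rw [mem_signedPerms] at hp
    rw [mem_filter, mem_signedPerms]
    refine ⟨⟨hp.1, fun j hj => ?_⟩, ?_⟩
    · simpa [negUpTo, show ¬(j : ℕ) ≤ d by omega] using hp.2 j (by omega)
    · simp [negUpTo, hp.2 ⟨d, hd⟩ le_rfl]
  · rw [mem_filter, mem_signedPerms] at hp
    obtain ⟨⟨hfix, hsign⟩, hne⟩ := hp
    refine mem_signedPerms.2 ⟨hfix, (forall_succ_le_and_iff hd).1 ⟨fun j hj => ?_, ?_⟩⟩
    · simpa [negUpTo, show ¬(j : ℕ) ≤ d by omega] using hsign j hj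
    · simpa [negUpTo] using neg_eq_iff_eq_neg.2 ((Int.units_eq_one_or _).resolve_left hne)
  · rw [hlam.flagLabels_negUpTo hd (mem_signedPerms.1 hp).1]

theorem IsTuckerLabeling.sum_alternatingIndicator_flagLabels (hlam : IsTuckerLabeling lam)
    {d : ℕ} (hd : d ≤ n) :
    ∑ p ∈ signedPerms n d d, alternatingIndicator (flagLabels lam p (range d)) = 1 := by
  induction d with
  | zero => simp [signedPerms_zero_zero, flagLabels, alternatingIndicator_zero]
  | succ d ih =>
    have hdn : d < n := hd
    have herase : (range (d + 1)).erase d = range d := by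
      rw [range_add_one, erase_insert notMem_range_self]
    calc ∑ p ∈ signedPerms n (d + 1) (d + 1),
          alternatingIndicator (flagLabels lam p (range (d + 1)))
      _ = ∑ p ∈ signedPerms n (d + 1) d,
            (alternatingIndicator (flagLabels lam p (range (d + 1)))
              + alternatingIndicator ((flagLabels lam p (range (d + 1))).map Neg.neg)) := by
        rw [sum_add_distrib, hlam.sum_map_neg_flagLabels hdn,
          ← filter_sign_eq_one_signedPerms hdn, sum_filter_add_sum_filter_not]
      _ = ∑ p ∈ signedPerms n (d + 1) d, ∑ i ∈ range (d + 1),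
            alternatingIndicator (flagLabels lam p ((range (d + 1)).erase i)) :=
        sum_congr rfl fun p _ => (sum_alternatingIndicator_erase fun i _ j _ =>
          hlam.ne_neg_flag (by omega) p i j).symm
      _ = ∑ p ∈ signedPerms n (d + 1) d, alternatingIndicator (flagLabels lam p (range d)) := by
        rw [sum_comm, sum_range_succ, herase, sum_eq_zero, zero_add]
        exact fun i hi => sum_flagLabels_eq_zero_of_notMem lam (by simpa using hi) hd
          (notMem_erase i _)
      _ = ∑ p ∈ signedPerms n d d, alternatingIndicator (flagLabels lam p (range d)) :=
        sum_flagLabels_signedPerms_succ lam hdn fun t => mem_range.1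
      _ = 1 := ih hdn.le

theorem IsTuckerLabeling.le_card (hlam : IsTuckerLabeling lam) {A : Finset ℕ}
    (hA : ∀ v, v ≠ 0 → (lam v).natAbs ∈ A) : n ≤ #A := by
  obtain ⟨p, -, hp⟩ := exists_ne_zero_of_sum_ne_zero
    ((hlam.sum_alternatingIndicator_flagLabels le_rfl).trans_ne one_ne_zero)
  have hinj := (alternatingIndicator_ne_zero.1 hp).injOn_natAbs
  have hmaps : ∀ i ∈ range n, (lam (flag p i)).natAbs ∈ A := fun i hi =>
    hA _ (flag_ne_zero (Nat.zero_lt_of_lt (mem_range.1 hi)) p i)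
  simpa using card_le_card_of_injOn _ hmaps hinj

end Tucker

section KneserLabeling

/-- Proper colorings of the Kneser graph on the `k`-subsets of `ι`. The values of `c` at sets of
other sizes are irrelevant. -/
def IsKneserColoring {ι : Type*} (c : Finset ι → ℕ) (k : ℕ) : Prop :=
  ∀ S T : Finset ι, #S = k → #T = k → Disjoint S T → c S ≠ c T

theorem IsKneserColoring.pos {ι : Type*} {c : Finset ι → ℕ} {k : ℕ}
    (hc : IsKneserColoring c k) : 0 < k := by
  refine Nat.pos_of_ne_zero ?_
  rintro rfl
  exact hc ∅ ∅ card_empty card_empty (disjoint_empty_left ∅) rfl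

variable {ι : Type*} [Fintype ι]

/-- The entries at which `v` has sign `s`. -/
def signSet (v : ι → SignType) (s : SignType) : Finset ι := {j | v j = s}

/-- The set of nonzero entries of `v`. -/
def supp (v : ι → SignType) : Finset ι := {j | v j ≠ 0}

/-- The colors of the `k`-subsets of the `s`-part of `v`. -/
def colors (c : Finset ι → ℕ) (k : ℕ) (v : ι → SignType) (s : SignType) : Set ℕ :=
  c '' {S | S ⊆ signSet v s ∧ #S = k}

/-- The smallest color of a `k`-subset of the positive or of the negative part of `v`, or the junk
value `0` if both parts have fewer than `k` elements. -/
noncomputable def minColor (c : Finset ι → ℕ) (k : ℕ) (v : ι → SignType) : ℕ :=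
  sInf (colors c k v 1 ∪ colors c k v (-1))

variable {v w : ι → SignType} {c : Finset ι → ℕ} {k : ℕ}

theorem signSet_neg (v : ι → SignType) (s : SignType) : signSet (-v) s = signSet v (-s) := by
  simp only [signSet, Pi.neg_apply, neg_eq_iff_eq_neg]

theorem supp_neg (v : ι → SignType) : supp (-v) = supp v := by
  simp [supp]

theorem supp_nonempty (hv : v ≠ 0) : (supp v).Nonempty := by
  obtain ⟨j, hj⟩ := Function.ne_iff.1 hv
  exact ⟨j, by simpa [supp] using hj⟩

theorem supp_mono (h : IsFace v w) : supp v ⊆ supp w := by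
  intro j hj
  simp only [supp, mem_filter_univ] at hj ⊢
  rwa [h j hj]

theorem IsFace.eq_of_card_supp_le (h : IsFace v w) (hcard : #(supp w) ≤ #(supp v)) : v = w := by
  funext j
  by_cases hj : v j = 0
  · have : j ∉ supp w := by
      rw [← eq_of_subset_of_card_le (supp_mono h) hcard]
      simp [supp, hj]
    rw [hj]
    simpa [supp, eq_comm] using this
  · exact (h j hj).symm

theorem card_supp (v : ι → SignType) : #(supp v) = #(signSet v 1) + #(signSet v (-1)) := by
  classical
  have hdisj : Disjoint (signSet v 1) (signSet v (-1)) :=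
    disjoint_filter.2 fun j _ h₁ h₂ => by simp [h₁] at h₂
  rw [← card_union_of_disjoint hdisj, signSet, signSet, ← filter_or]
  refine congrArg card (filter_congr fun j _ => ?_)
  generalize v j = s
  decide +revert

theorem colors_neg (s : SignType) : colors c k (-v) s = colors c k v (-s) := by
  simp only [colors, signSet_neg]

theorem minColor_neg : minColor c k (-v) = minColor c k v := by
  simp only [minColor, colors_neg, neg_neg, Set.union_comm]

theorem colors_subset {C : Finset ℕ} (hC : ∀ S, #S = k → c S ∈ C) (s : SignType) :
    colors c k v s ⊆ C := by
  rintro _ ⟨S, ⟨-, hS⟩, rfl⟩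
  exact hC S hS

theorem IsKneserColoring.eq_of_mem_colors (hc : IsKneserColoring c k) (h : IsFace v w)
    {s t : SignType} (hs : s ≠ 0) {m : ℕ} (hv : m ∈ colors c k v s) (hw : m ∈ colors c k w t) :
    s = t := by
  obtain ⟨S, ⟨hSv, hS⟩, rfl⟩ := hv
  obtain ⟨T, ⟨hTw, hT⟩, hcTS⟩ := hw
  by_contra hst
  refine hc S T hS hT (disjoint_left.2 fun j hjS hjT => hst ?_) hcTS.symm
  have hvj : v j = s := by simpa [signSet] using hSv hjS
  have hwj : w j = t := by simpa [signSet] using hTw hjT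
  rw [← hvj, ← hwj, h j (hvj ▸ hs)]

theorem colors_nonempty {s : SignType} (h : k ≤ #(signSet v s)) : (colors c k v s).Nonempty := by
  obtain ⟨S, hS⟩ := exists_subset_card_eq h
  exact ⟨c S, S, hS, rfl⟩

theorem minColor_mem (hv : 2 * k < #(supp v) + 2) :
    minColor c k v ∈ colors c k v 1 ∪ colors c k v (-1) := by
  rw [card_supp] at hv
  refine Nat.sInf_mem ?_
  rcases (by omega : k ≤ #(signSet v 1) ∨ k ≤ #(signSet v (-1))) with h | h
  · exact (colors_nonempty h).inl
  · exact (colors_nonempty h).inr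

theorem minColor_mem_of_forall {C : Finset ℕ} (hC : ∀ S, #S = k → c S ∈ C)
    (hv : 2 * k < #(supp v) + 2) : minColor c k v ∈ C :=
  Set.union_subset (colors_subset hC 1) (colors_subset hC (-1)) (minColor_mem hv)

/-- The absolute value of Matoušek's labeling: the size of the support if that is at most `2k - 2`,
and otherwise, when one of the two parts must contain a `k`-subset, the smallest color shifted past
these sizes. -/
noncomputable def kneserAbs (c : Finset ι → ℕ) (k : ℕ) (v : ι → SignType) : ℕ :=
  if #(supp v) + 2 ≤ 2 * k then #(supp v) else 2 * k + minColor c k v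

theorem kneserAbs_neg : kneserAbs c k (-v) = kneserAbs c k v := by
  simp only [kneserAbs, supp_neg, minColor_neg]

theorem kneserAbs_pos (hk : 0 < k) (hv : v ≠ 0) : 0 < kneserAbs c k v := by
  unfold kneserAbs
  split_ifs
  · exact (supp_nonempty hv).card_pos
  · omega

theorem kneserAbs_mem {C : Finset ℕ} (hC : ∀ S, #S = k → c S ∈ C) (hv : v ≠ 0) :
    kneserAbs c k v ∈ Icc 1 (2 * k - 2) ∪ C.image (2 * k + ·) := by
  rw [kneserAbs, mem_union]
  split_ifs with h
  · exact .inl (mem_Icc.2 ⟨(supp_nonempty hv).card_pos, by omega⟩)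
  · exact .inr (mem_image_of_mem _ (minColor_mem_of_forall hC (not_le.1 h)))

variable [LinearOrder ι]

/-- The sign of the first nonzero entry of `v`, or `0` if `v = 0`. -/
def leadingSign (v : ι → SignType) : SignType :=
  if h : (supp v).Nonempty then v ((supp v).min' h) else 0

theorem leadingSign_neg (v : ι → SignType) : leadingSign (-v) = -leadingSign v := by
  simp only [leadingSign, supp_neg]
  split_ifs <;> rfl

theorem leadingSign_ne_zero {v : ι → SignType} (hv : v ≠ 0) : leadingSign v ≠ 0 := by
  have hne := supp_nonempty hv
  rw [leadingSign, dif_pos hne]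
  simpa [supp] using (supp v).min'_mem hne

open Classical in
/-- The sign of Matoušek's labeling: that of the first nonzero entry if the support is small, and
otherwise that of the part in which the smallest color occurs. -/
noncomputable def kneserSign (c : Finset ι → ℕ) (k : ℕ) (v : ι → SignType) : SignType :=
  if #(supp v) + 2 ≤ 2 * k then leadingSign v
  else if minColor c k v ∈ colors c k v 1 then 1 else -1

/-- Matoušek's labeling of sign vectors induced by the coloring `c` of the `k`-subsets. -/
noncomputable def kneserLabel (c : Finset ι → ℕ) (k : ℕ) (v : ι → SignType) : ℤ :=
  kneserSign c k v * kneserAbs c k v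

theorem minColor_mem_colors_kneserSign (hv : 2 * k < #(supp v) + 2) :
    minColor c k v ∈ colors c k v (kneserSign c k v) := by
  rw [kneserSign, if_neg hv.not_ge]
  split_ifs with h
  · exact h
  · exact (minColor_mem hv).resolve_left h

theorem kneserSign_ne_zero (hv : v ≠ 0) : kneserSign c k v ≠ 0 := by
  unfold kneserSign
  split_ifs
  exacts [leadingSign_ne_zero hv, by decide, by decide]

theorem IsKneserColoring.kneserSign_neg (hc : IsKneserColoring c k) (hv : v ≠ 0) :
    kneserSign c k (-v) = -kneserSign c k v := by
  by_cases h : #(supp v) + 2 ≤ 2 * k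
  · simp only [kneserSign, supp_neg, if_pos h, leadingSign_neg]
  · have hmem := minColor_mem_colors_kneserSign (c := c) (not_le.1 h)
    have hmem_neg := minColor_mem_colors_kneserSign (c := c) (k := k) (v := -v)
      (by rwa [supp_neg, ← not_le])
    rw [minColor_neg, colors_neg] at hmem_neg
    exact neg_eq_iff_eq_neg.1
      (hc.eq_of_mem_colors (fun _ _ => rfl) (kneserSign_ne_zero hv) hmem hmem_neg).symm

theorem natAbs_kneserLabel (hv : v ≠ 0) : (kneserLabel c k v).natAbs = kneserAbs c k v := by
  have hsign : ∀ s : SignType, s ≠ 0 → (s : ℤ).natAbs = 1 := by decide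
  rw [kneserLabel, Int.natAbs_mul, hsign _ (kneserSign_ne_zero hv), one_mul, Int.natAbs_natCast]

theorem IsKneserColoring.kneserSign_eq (hc : IsKneserColoring c k) (hv : v ≠ 0) (h : IsFace v w)
    (habs : kneserAbs c k v = kneserAbs c k w) : kneserSign c k v = kneserSign c k w := by
  unfold kneserAbs at habs
  split_ifs at habs with hv_small hw_small hw_small
  · rw [h.eq_of_card_supp_le habs.ge]
  · omega
  · omega
  · refine hc.eq_of_mem_colors h (kneserSign_ne_zero hv)
      (minColor_mem_colors_kneserSign (not_le.1 hv_small)) ?_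
    rw [Nat.add_left_cancel habs]
    exact minColor_mem_colors_kneserSign (not_le.1 hw_small)

theorem IsKneserColoring.isTuckerLabeling (hc : IsKneserColoring c k) :
    IsTuckerLabeling (kneserLabel c k) where
  map_neg v hv := by
    rw [kneserLabel, kneserLabel, hc.kneserSign_neg hv, kneserAbs_neg, SignType.coe_neg, neg_mul]
  ne_neg_of_isFace v w hv h heq := by
    have hw : w ≠ 0 := h.ne_zero hv
    have habs : kneserAbs c k v = kneserAbs c k w := by
      rw [← natAbs_kneserLabel hv, ← natAbs_kneserLabel hw, heq, Int.natAbs_neg]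
    have hlabel : kneserLabel c k v = kneserLabel c k w := by
      rw [kneserLabel, kneserLabel, hc.kneserSign_eq hv h habs, habs]
    have hzero : kneserLabel c k v = 0 := self_eq_neg.1 (heq.trans (congrArg _ hlabel.symm))
    have hpos := kneserAbs_pos (c := c) hc.pos hv
    rw [← natAbs_kneserLabel hv, hzero] at hpos
    exact hpos.ne rfl

theorem IsKneserColoring.add_two_le {n k : ℕ} {c : Finset (Fin n) → ℕ}
    (hc : IsKneserColoring c k) {C : Finset ℕ} (hC : ∀ S, #S = k → c S ∈ C) :
    n + 2 ≤ 2 * k + #C := by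
  have hn : n ≤ #(Icc 1 (2 * k - 2) ∪ C.image (2 * k + ·)) :=
    hc.isTuckerLabeling.le_card fun v hv => natAbs_kneserLabel (c := c) hv ▸ kneserAbs_mem hC hv
  have hcard : #(Icc 1 (2 * k - 2) ∪ C.image (2 * k + ·)) ≤ (2 * k - 2) + #C := by
    refine (card_union_le _ _).trans (Nat.add_le_add ?_ card_image_le)
    simp
  have := hc.pos
  omega

end KneserLabeling

end KneserLovasz

/-- **Kneser–Lovász theorem.** For `n ≥ 2k > 1`, the `(n,k)`-Kneser graph, whose
vertices are the `k`-element subsets of `{1,…,n}` (modeled as `Fin n`) with edges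
between disjoint sets, has no proper coloring with `n - 2k + 1` colors. -/
theorem kneser_lovasz (n k : ℕ) (hk : 1 ≤ k) (hn : 2 * k ≤ n) :
    ¬ ∃ c : Finset (Fin n) → ℕ,
      (∀ S : Finset (Fin n), S.card = k → c S ∈ Finset.Icc 1 (n - 2 * k + 1)) ∧
      (∀ S T : Finset (Fin n), S.card = k → T.card = k →
        Disjoint S T → c S ≠ c T) := by
  rintro ⟨c, hC, hc⟩
  have hbound : n + 2 ≤ 2 * k + (Finset.Icc 1 (n - 2 * k + 1)).card :=
    KneserLovasz.IsKneserColoring.add_two_le hc hC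
  rw [Nat.card_Icc] at hbound
  omega
end

section
/- Let n ≥ 2k and k ≥ 2, and let c be a proper coloring of the (n,k)-Kneser graph (with any set of colors). If a color class P_ℓ of c is not star-shaped, then |P_ℓ| ≤ k² · C(n−2, k−2), where C(n−2,k−2) is the binomial coefficient. -/
/-!
A color class of a proper coloring of the Kneser graph is an intersecting family. Fix a member `S`.
Every member meets `S` in some `i`, and since the family has no common element, some member `T`
avoids `i`; every member through `i` meets `T` in some `j ≠ i`. So all members contain one of at
most `k²` pairs `{i, j}`, and each pair lies in at most `C(n - 2, k - 2)` sets of size `k`.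
-/

open Finset

section IntersectingFamily

variable {V : Type*}

/-- A family of sets is star-shaped if some point belongs to all of its members. Over a nonempty
ground set this says that the intersection of the family is nonempty, the intersection of the empty
family being the whole ground set. -/
def IsStarShaped (𝒜 : Set (Finset V)) : Prop :=
  ∃ i, ∀ A ∈ 𝒜, i ∈ A

variable [DecidableEq V] {𝒜 : Finset (Finset V)}

theorem card_le_card_mul_of_forall_not_disjoint {T : Finset V} {m : ℕ}
    (hT : ∀ A ∈ 𝒜, ¬Disjoint T A) (hdeg : ∀ i ∈ T, #{A ∈ 𝒜 | i ∈ A} ≤ m) :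
    #𝒜 ≤ #T * m :=
  calc
    #𝒜 = ∑ _A ∈ 𝒜, 1 := card_eq_sum_ones 𝒜
    _ ≤ ∑ A ∈ 𝒜, #(T ∩ A) :=
      sum_le_sum fun A hA ↦ card_pos.mpr (not_disjoint_iff_nonempty_inter.mp (hT A hA))
    _ ≤ #T * m := sum_card_inter_le hdeg

theorem card_le_sq_mul_of_intersecting_of_codegree_le {k d : ℕ}
    (hinter : (𝒜 : Set (Finset V)).Intersecting) (hstar : ¬IsStarShaped (𝒜 : Set (Finset V)))
    (hcard : ∀ A ∈ 𝒜, #A ≤ k) (hcodeg : ∀ i j, i ≠ j → #{A ∈ 𝒜 | i ∈ A ∧ j ∈ A} ≤ d) :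
    #𝒜 ≤ k ^ 2 * d := by
  obtain rfl | ⟨S, hS⟩ := 𝒜.eq_empty_or_nonempty
  · simp
  have degree_le (i : V) : #{A ∈ 𝒜 | i ∈ A} ≤ k * d := by
    obtain ⟨T, hT, hiT⟩ : ∃ T ∈ 𝒜, i ∉ T := by
      by_contra! h
      exact hstar ⟨i, h⟩
    have codegree_le (j : V) (hj : j ∈ T) : #{A ∈ {A ∈ 𝒜 | i ∈ A} | j ∈ A} ≤ d := by
      rw [filter_filter]
      exact hcodeg i j fun hij ↦ hiT (hij ▸ hj)
    calc
      #{A ∈ 𝒜 | i ∈ A} ≤ #T * d :=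
        card_le_card_mul_of_forall_not_disjoint
          (fun A hA ↦ hinter hT (mem_filter.mp hA).1) codegree_le
      _ ≤ k * d := Nat.mul_le_mul_right d (hcard T hT)
  calc
    #𝒜 ≤ #S * (k * d) :=
      card_le_card_mul_of_forall_not_disjoint (fun A hA ↦ hinter hS hA) fun i _ ↦ degree_le i
    _ ≤ k * (k * d) := Nat.mul_le_mul_right _ (hcard S hS)
    _ = k ^ 2 * d := by ring

theorem card_filter_subset_le_choose [Fintype V] {k : ℕ} (hsized : (𝒜 : Set (Finset V)).Sized k)
    (t : Finset V) : #{A ∈ 𝒜 | t ⊆ A} ≤ (Fintype.card V - #t).choose (k - #t) := by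
  obtain htk | hkt := le_or_gt #t k
  · rw [← card_univ, ← card_filter_powersetCard_subset t univ k (subset_univ t) htk]
    exact card_le_card (filter_subset_filter _ (subset_powersetCard_univ_iff.mpr hsized))
  · have no_superset : ∀ A ∈ 𝒜, ¬t ⊆ A := fun A hA htA ↦
      (card_le_card htA).not_gt (hsized hA ▸ hkt)
    simp [filter_false_of_mem no_superset]

theorem card_le_sq_mul_choose_of_intersecting_of_not_isStarShaped [Fintype V] {k : ℕ}
    (hsized : (𝒜 : Set (Finset V)).Sized k) (hinter : (𝒜 : Set (Finset V)).Intersecting)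
    (hstar : ¬IsStarShaped (𝒜 : Set (Finset V))) :
    #𝒜 ≤ k ^ 2 * (Fintype.card V - 2).choose (k - 2) := by
  refine card_le_sq_mul_of_intersecting_of_codegree_le hinter hstar (fun A hA ↦ (hsized hA).le)
    fun i j hij ↦ ?_
  simpa only [insert_subset_iff, singleton_subset_iff, card_pair hij] using
    card_filter_subset_le_choose hsized {i, j}

end IntersectingFamily

theorem nonStarShaped_class_small_general {V α : Type*} [Fintype V] [DecidableEq α] (k : ℕ)
    (c : Finset V → α)
    (hproper : ∀ S T : Finset V, #S = k → #T = k → Disjoint S T → c S ≠ c T) (ℓ : α)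
    (hns : ¬∃ i : V, ∀ S : Finset V, #S = k → c S = ℓ → i ∈ S) :
    #{S : Finset V | #S = k ∧ c S = ℓ} ≤ k ^ 2 * (Fintype.card V - 2).choose (k - 2) := by
  classical
  apply card_le_sq_mul_choose_of_intersecting_of_not_isStarShaped
  · intro S hS
    exact ((mem_filter_univ S).mp hS).1
  · intro S hS T hT hST
    obtain ⟨hSk, hSℓ⟩ := (mem_filter_univ S).mp hS
    obtain ⟨hTk, hTℓ⟩ := (mem_filter_univ T).mp hT
    exact hproper S T hSk hTk hST (hSℓ.trans hTℓ.symm)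
  · rintro ⟨i, hi⟩
    exact hns ⟨i, fun S hSk hSℓ ↦ hi S ((mem_filter_univ S).mpr ⟨hSk, hSℓ⟩)⟩

open Classical in
/-- For `n ≥ 2k`, `k ≥ 2`, and a proper coloring `c` of the `(n,k)`-Kneser graph
(with an arbitrary set of colors), any color class `P_ℓ` that is not star-shaped
(i.e. there is no element common to all of its members) has
`|P_ℓ| ≤ k² · C(n-2, k-2)`. -/
theorem nonStarShaped_class_small {α : Type*} (n k : ℕ) (hk : 2 ≤ k) (hn : 2 * k ≤ n)
    (c : Finset (Fin n) → α)
    (hproper : ∀ S T : Finset (Fin n), S.card = k → T.card = k →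
      Disjoint S T → c S ≠ c T)
    (ℓ : α)
    (hns : ¬ ∃ i : Fin n, ∀ S : Finset (Fin n), S.card = k → c S = ℓ → i ∈ S) :
    ((Finset.univ : Finset (Finset (Fin n))).filter
        (fun S : Finset (Fin n) => S.card = k ∧ c S = ℓ)).card
      ≤ k ^ 2 * (n - 2).choose (k - 2) := by
  simpa only [Fintype.card_fin] using nonStarShaped_class_small_general k c hproper ℓ hns
end

section
/- Let k ≥ 2 and n ≥ k⁴. Then (n − 2k + 1) · k² · C(n−2, k−2) < C(n, k), where C(a,b) denotes the binomial coefficient. -/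
/-!
Counting pairs of an `s`-subset inside a `k`-subset in two ways shows that `C(n, k) / C(n-s, k-s)`
is a ratio of falling factorials. For `s = 2` this turns the inequality into
`(n - 2k + 1) · k³(k - 1) < (n - 1) · n`, which holds factor by factor.
-/

theorem descFactorial_two (n : ℕ) : n.descFactorial 2 = (n - 1) * n := by
  rw [Nat.descFactorial_succ, Nat.descFactorial_one]

theorem choose_mul_descFactorial {n k s : ℕ} (hsk : s ≤ k) :
    n.choose k * k.descFactorial s = n.descFactorial s * (n - s).choose (k - s) := by
  rw [Nat.descFactorial_eq_factorial_mul_choose, Nat.descFactorial_eq_factorial_mul_choose,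
    mul_left_comm, Nat.choose_mul hsk, mul_assoc]

theorem mul_choose_sub_lt_choose_iff {n k s : ℕ} (c : ℕ) (hsk : s ≤ k) (hkn : k ≤ n) :
    c * (n - s).choose (k - s) < n.choose k ↔ c * k.descFactorial s < n.descFactorial s := by
  have descFactorial_pos : 0 < k.descFactorial s := Nat.descFactorial_pos.mpr hsk
  have choose_pos : 0 < (n - s).choose (k - s) := Nat.choose_pos (Nat.sub_le_sub_right hkn s)
  rw [← Nat.mul_lt_mul_right descFactorial_pos, choose_mul_descFactorial hsk, mul_right_comm,
    Nat.mul_lt_mul_right choose_pos]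

theorem counting_inequality_general {n k : ℕ} (hk : 2 ≤ k) (hn : k ^ 3 * (k - 1) ≤ n) :
    (n - 2 * k + 1) * k ^ 2 * (n - 2).choose (k - 2) < n.choose k := by
  have four_mul_le : 4 * k ≤ n :=
    calc 4 * k = 2 ^ 2 * k * 1 := by ring
      _ ≤ k ^ 2 * k * (k - 1) := by gcongr; omega
      _ = k ^ 3 * (k - 1) := by ring
      _ ≤ n := hn
  rw [mul_choose_sub_lt_choose_iff _ hk (by omega)]
  calc (n - 2 * k + 1) * k ^ 2 * k.descFactorial 2
      = (n - 2 * k + 1) * (k ^ 3 * (k - 1)) := by rw [descFactorial_two]; ring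
    _ ≤ (n - 2 * k + 1) * n := by gcongr
    _ < (n - 1) * n := by gcongr <;> omega
    _ = n.descFactorial 2 := (descFactorial_two n).symm

/-- For `k ≥ 2` and `n ≥ k⁴`, we have `(n - 2k + 1) · k² · C(n-2, k-2) < C(n, k)`. -/
theorem counting_inequality (n k : ℕ) (hk : 2 ≤ k) (hn : k ^ 4 ≤ n) :
    (n - 2 * k + 1) * k ^ 2 * (n - 2).choose (k - 2) < n.choose k :=
  counting_inequality_general hk ((Nat.mul_le_mul_left (k ^ 3) (Nat.sub_le k 1)).trans hn)
end

section
/- (Octahedral Tucker lemma) Let n ≥ 2. If λ : B^n → {1, ±2, …, ±n} is antipodal, then there exist two elements of B^n that are complementary with respect to λ. -/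
/-!
The nonzero sign vectors are the vertices of the barycentric subdivision of the boundary of the
octahedron. Modulo 2, the indicator `F` of the simplices whose labels have increasing absolute
values and alternating signs, the first one positive, satisfies `δF = F + F ∘ (-1)` on simplices
without complementary labels. In the sum of `F` over the facets, fold antipodal facets together to
get `δF` over a hemisphere; by Stokes' formula this is the sum of `F` over the facets of the
equator. Hence the number of alternating facets is odd in every dimension (Ky Fan's theorem),
whereas an alternating facet needs as many distinct absolute values as there are coordinates.
-/

namespace OctahedralTucker

section Coboundary

variable {α β M : Type*} [DecidableEq α] [DecidableEq β] [AddCommMonoid M]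

/-- The coboundary of a cochain on simplices with possibly repeated vertices, without signs; it is
meant for coefficients of characteristic two. -/
def coboundary (G : Multiset α → M) (s : Multiset α) : M :=
  (s.map fun a => G (s.erase a)).sum

theorem coboundary_cons (G : Multiset α → M) (a : α) (s : Multiset α) :
    coboundary G (a ::ₘ s) = G s + coboundary (fun t => G (a ::ₘ t)) s := by
  simp only [coboundary, Multiset.map_cons, Multiset.sum_cons, Multiset.erase_cons_head]
  congr 2
  exact Multiset.map_congr rfl fun b hb => by rw [Multiset.erase_cons_tail_of_mem hb]

theorem coboundary_map (G : Multiset β → M) (f : α → β) (s : Multiset α) :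
    coboundary G (s.map f) = coboundary (fun t => G (t.map f)) s := by
  simp only [coboundary, Multiset.map_map, Function.comp_apply]
  congr 1
  exact Multiset.map_congr rfl fun a ha => by rw [Multiset.map_erase_of_mem f s ha]

end Coboundary

section Alternation

/-- Comparison by absolute value, ties being broken by the usual order. -/
def AbsLE (x y : ℤ) : Prop :=
  x.natAbs < y.natAbs ∨ x.natAbs = y.natAbs ∧ x ≤ y

instance : DecidableRel AbsLE := fun x y => by unfold AbsLE; infer_instance
instance : Std.Total AbsLE := ⟨fun x y => by unfold AbsLE; lia⟩
instance : IsTrans ℤ AbsLE := ⟨fun x y z => by unfold AbsLE; lia⟩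
instance : Std.Antisymm AbsLE := ⟨fun x y => by unfold AbsLE; lia⟩

theorem multiset_induction_on_absLE {p : Multiset ℤ → Prop} (zero : p 0)
    (cons : ∀ x s, (∀ y ∈ s, AbsLE x y) → p s → p (x ::ₘ s)) (s : Multiset ℤ) : p s := by
  suffices h : ∀ l : List ℤ, l.Pairwise AbsLE → p l by
    simpa only [Multiset.sort_eq] using h (s.sort AbsLE) (Multiset.pairwise_sort s AbsLE)
  intro l hl
  induction hl with
  | nil => exact zero
  | cons hx _ ih => exact cons _ _ hx ih

/-- The sign of an integer as a bit: `1` for positive integers and `0` for all others. -/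
def signBit (x : ℤ) : ZMod 2 := if 0 < x then 1 else 0

theorem signBit_neg {x : ℤ} (hx : x ≠ 0) : signBit (-x) = signBit x + 1 := by
  rcases hx.lt_or_gt with h | h
  · simp [signBit, h, h.le]
  · simp [signBit, h, h.le, CharTwo.add_self_eq_zero]

/-- The indicator of the lists whose signs alternate, the first one being opposite to `e`. -/
def listAlternation : ZMod 2 → List ℤ → ZMod 2
  | _, [] => 1
  | e, x :: l => (e + signBit x) * listAlternation (signBit x) l

/-- The indicator of the multisets whose signs alternate along increasing absolute value, the first
sign being opposite to `e`. -/
def alternation (e : ZMod 2) (s : Multiset ℤ) : ZMod 2 :=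
  listAlternation e (s.sort AbsLE)

theorem alternation_zero (e : ZMod 2) : alternation e 0 = 1 := by
  simp only [alternation, Multiset.sort_zero, listAlternation]

theorem alternation_cons (e : ZMod 2) {x : ℤ} {s : Multiset ℤ} (hx : ∀ y ∈ s, AbsLE x y) :
    alternation e (x ::ₘ s) = (e + signBit x) * alternation (signBit x) s := by
  simp only [alternation, Multiset.sort_cons x s AbsLE hx, listAlternation]

theorem coboundary_alternation (e : ZMod 2) (s : Multiset ℤ) :
    coboundary (alternation e) s = alternation 0 s + alternation 1 s := by
  induction s using multiset_induction_on_absLE generalizing e with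
  | zero => simp only [alternation_zero]; decide +revert
  | cons x s hx ih =>
    have coboundary_head : coboundary (fun t => alternation e (x ::ₘ t)) s
        = (e + signBit x) * coboundary (alternation (signBit x)) s := by
      rw [coboundary, coboundary, ← Multiset.sum_map_mul_left]
      congr 1
      exact Multiset.map_congr rfl fun a _ =>
        alternation_cons e fun y hy => hx y (Multiset.mem_of_mem_erase hy)
    have identity : ∀ (e b : ZMod 2) (f : ZMod 2 → ZMod 2),
        f e + (e + b) * (f 0 + f 1) = (0 + b) * f b + (1 + b) * f b := by decide
    rw [coboundary_cons, coboundary_head, ih, alternation_cons 0 hx, alternation_cons 1 hx]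
    exact identity e (signBit x) fun b => alternation b s

/-- No element is the negative of another one or of itself; in particular `0` does not occur. -/
def ComplementFree (s : Multiset ℤ) : Prop := ∀ x ∈ s, ∀ y ∈ s, x ≠ -y

theorem ComplementFree.of_cons {x : ℤ} {s : Multiset ℤ} (h : ComplementFree (x ::ₘ s)) :
    ComplementFree s := fun y hy z hz =>
  h y (Multiset.mem_cons_of_mem hy) z (Multiset.mem_cons_of_mem hz)

theorem alternation_map_neg (e : ZMod 2) {s : Multiset ℤ} (hs : ComplementFree s) :
    alternation e (s.map Neg.neg) = alternation (e + 1) s := by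
  induction s using multiset_induction_on_absLE generalizing e with
  | zero => simp only [Multiset.map_zero, alternation_zero]
  | cons x s hx ih =>
    have hx0 : x ≠ 0 := by
      have := hs x (Multiset.mem_cons_self x s) x (Multiset.mem_cons_self x s)
      lia
    have hneg : ∀ y ∈ s.map Neg.neg, AbsLE (-x) y := by
      intro y hy
      obtain ⟨z, hz, rfl⟩ := Multiset.mem_map.1 hy
      have := hs x (Multiset.mem_cons_self x s) z (Multiset.mem_cons_of_mem hz)
      have := hx z hz
      unfold AbsLE at *
      lia
    rw [Multiset.map_cons, alternation_cons e hneg, alternation_cons (e + 1) hx,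
      ih _ hs.of_cons, signBit_neg hx0, add_assoc (signBit x), CharTwo.add_self_eq_zero, add_zero,
      add_right_comm e, add_assoc e]

theorem coboundary_alternation_zero {s : Multiset ℤ} (hs : ComplementFree s) :
    coboundary (alternation 0) s = alternation 0 s + alternation 0 (s.map Neg.neg) := by
  rw [coboundary_alternation, alternation_map_neg 0 hs, zero_add]

theorem nodup_natAbs_of_alternation_ne_zero {e : ZMod 2} {s : Multiset ℤ} (hs : ComplementFree s)
    (he : alternation e s ≠ 0) : (s.map Int.natAbs).Nodup := by
  induction s using multiset_induction_on_absLE generalizing e with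
  | zero => simp only [Multiset.map_zero, Multiset.nodup_zero]
  | cons x s hx ih =>
    rw [alternation_cons e hx] at he
    have htail := right_ne_zero_of_mul he
    rw [Multiset.map_cons, Multiset.nodup_cons]
    refine ⟨fun hmem => htail ?_, ih hs.of_cons htail⟩
    obtain ⟨y, hy, hyx⟩ := Multiset.mem_map.1 hmem
    obtain rfl : y = x := by
      have := hs x (Multiset.mem_cons_self x s) y (Multiset.mem_cons_of_mem hy)
      lia
    obtain ⟨t, rfl⟩ := Multiset.exists_cons_of_mem hy
    rw [alternation_cons _ fun z hz => hx z (Multiset.mem_cons_of_mem hz),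
      CharTwo.add_self_eq_zero, zero_mul]

end Alternation

section SimplexFlags

variable {ι R : Type*} [DecidableEq ι]

/-- The chains `S ⊃ S \ {i₁} ⊃ S \ {i₁, i₂} ⊃ …` with `k` members, all of them nonempty. For
`k = S.card` these are the facets of the barycentric subdivision of the simplex on `S`. -/
def flags : ℕ → Finset ι → Multiset (Multiset (Finset ι))
  | 0, _ => {0}
  | k + 1, S => S.val.bind fun i => (flags k (S.erase i)).map (S ::ₘ ·)

theorem mem_flags_succ {k : ℕ} {S : Finset ι} {c : Multiset (Finset ι)} :
    c ∈ flags (k + 1) S ↔ ∃ i ∈ S, ∃ d ∈ flags k (S.erase i), S ::ₘ d = c := by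
  simp only [flags, Multiset.mem_bind, Multiset.mem_map, Finset.mem_val]

theorem card_of_mem_flags {k : ℕ} {S : Finset ι} {c : Multiset (Finset ι)}
    (hc : c ∈ flags k S) : c.card = k := by
  induction k generalizing S c with
  | zero => rw [Multiset.mem_singleton.1 hc, Multiset.card_zero]
  | succ k ih =>
    obtain ⟨i, -, d, hd, rfl⟩ := mem_flags_succ.1 hc
    rw [Multiset.card_cons, ih hd]

theorem nonempty_and_subset_of_mem_flags {k : ℕ} {S T : Finset ι} {c : Multiset (Finset ι)}
    (hc : c ∈ flags k S) (hT : T ∈ c) : T.Nonempty ∧ T ⊆ S := by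
  induction k generalizing S c with
  | zero => simp [Multiset.mem_singleton.1 hc] at hT
  | succ k ih =>
    obtain ⟨i, hi, d, hd, rfl⟩ := mem_flags_succ.1 hc
    rcases Multiset.mem_cons.1 hT with rfl | hT
    · exact ⟨⟨i, hi⟩, subset_rfl⟩
    · exact ⟨(ih hd hT).1, (ih hd hT).2.trans (Finset.erase_subset i S)⟩

theorem subset_or_subset_of_mem_flags {k : ℕ} {S T U : Finset ι} {c : Multiset (Finset ι)}
    (hc : c ∈ flags k S) (hT : T ∈ c) (hU : U ∈ c) : T ⊆ U ∨ U ⊆ T := by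
  induction k generalizing S c with
  | zero => simp [Multiset.mem_singleton.1 hc] at hT
  | succ k ih =>
    have hTS := (nonempty_and_subset_of_mem_flags hc hT).2
    have hUS := (nonempty_and_subset_of_mem_flags hc hU).2
    obtain ⟨i, -, d, hd, rfl⟩ := mem_flags_succ.1 hc
    rcases Multiset.mem_cons.1 hT with rfl | hT
    · exact .inr hUS
    rcases Multiset.mem_cons.1 hU with rfl | hU
    · exact .inl hTS
    exact ih hd hT hU

theorem sum_flags_succ [AddCommMonoid R] (k : ℕ) (S : Finset ι) (G : Multiset (Finset ι) → R) :
    ((flags (k + 1) S).map G).sum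
      = ∑ i ∈ S, ((flags k (S.erase i)).map fun c => G (S ::ₘ c)).sum := by
  simp only [flags, Multiset.map_bind, Multiset.sum_bind, Multiset.map_map, Function.comp_apply,
    Finset.sum]

variable [Semiring R] [CharP R 2]

theorem sum_sum_erase_eq_zero_of_symm (S : Finset ι) (f : ι → ι → R)
    (hf : ∀ i j, f i j = f j i) : ∑ i ∈ S, ∑ j ∈ S.erase i, f i j = 0 := by
  rw [Finset.sum_sigma']
  refine Finset.sum_involution (fun p _ => ⟨p.2, p.1⟩) ?_ ?_ ?_ fun _ _ => rfl
  · intro p _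
    rw [hf p.1 p.2, CharTwo.add_self_eq_zero]
  · rintro ⟨i, j⟩ hp _ heq
    simp only [Finset.mem_sigma, Finset.mem_erase] at hp
    exact hp.2.1 (congrArg Sigma.fst heq)
  · rintro ⟨i, j⟩ hp
    simp only [Finset.mem_sigma, Finset.mem_erase] at hp ⊢
    exact ⟨hp.2.2, hp.2.1.symm, hp.1⟩

/- Stokes' formula: a flag from which a member other than `S` is removed can be completed again in
exactly two ways, so modulo 2 only the flags from which `S` itself is removed survive. -/
theorem sum_flags_coboundary (k : ℕ) (S : Finset ι) (G : Multiset (Finset ι) → R) :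
    ((flags (k + 1) S).map (coboundary G)).sum
      = ∑ i ∈ S, ((flags k (S.erase i)).map G).sum := by
  induction k generalizing S G with
  | zero => simp [flags, coboundary]
  | succ k ih =>
    have inner_faces_cancel : ∑ i ∈ S, ∑ j ∈ S.erase i,
        ((flags k ((S.erase i).erase j)).map fun c => G (S ::ₘ c)).sum = 0 :=
      sum_sum_erase_eq_zero_of_symm S _ fun i j => by rw [Finset.erase_right_comm]
    simp only [sum_flags_succ (k + 1), coboundary_cons, Multiset.sum_map_add, ih,
      Finset.sum_add_distrib, inner_faces_cancel, add_zero]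

end SimplexFlags

section PowersetSums

variable {ι R : Type*} [DecidableEq ι]

theorem sum_powerset_insert_eq_sum_add_compl [AddCommMonoid R] {S : Finset ι} {s : ι} (hs : s ∉ S)
    (f : Finset ι → R) :
    ∑ A ∈ (insert s S).powerset, f A = ∑ A ∈ S.powerset, (f A + f (insert s S \ A)) := by
  rw [Finset.sum_powerset_insert hs, Finset.sum_add_distrib]
  congr 1
  refine Finset.sum_nbij' (S \ ·) (S \ ·) (by simp) (by simp) ?_ ?_ ?_ <;>
    intro A hA <;> rw [Finset.mem_powerset] at hA
  · exact Finset.sdiff_sdiff_eq_self hA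
  · exact Finset.sdiff_sdiff_eq_self hA
  · rw [Finset.insert_sdiff_of_notMem _ fun h => hs (Finset.sdiff_subset h),
      Finset.sdiff_sdiff_eq_self hA]

theorem sum_powerset_eq_zero_of_insert_eq [Semiring R] [CharP R 2] {S : Finset ι} {i : ι}
    (hi : i ∈ S) (f : Finset ι → R) (hf : ∀ A, f (insert i A) = f A) :
    ∑ A ∈ S.powerset, f A = 0 := by
  rw [← Finset.insert_erase hi, Finset.sum_powerset_insert (Finset.notMem_erase i S)]
  simp only [hf, CharTwo.add_self_eq_zero]

end PowersetSums

section OctahedronFlags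

variable {ι R : Type*} [DecidableEq ι]

/-- A nonzero vector in `{-1, 0, 1}^ι`, encoded by its positive and its negative coordinates; the
product order is the face order, and `Prod.swap` is the antipodal map. -/
def IsSignVector (v : Finset ι × Finset ι) : Prop := Disjoint v.1 v.2 ∧ v ≠ ⊥

/-- A simplex of the barycentric subdivision of the boundary of the octahedron: a multiset of
pairwise comparable sign vectors. -/
def IsSignFlag (c : Multiset (Finset ι × Finset ι)) : Prop :=
  (∀ v ∈ c, IsSignVector v) ∧ ∀ v ∈ c, ∀ w ∈ c, v ≤ w ∨ w ≤ v

/-- The sign vector with support `T` in the orthant that is positive exactly on `A`. -/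
def orthant (A T : Finset ι) : Finset ι × Finset ι := (T ∩ A, T \ A)

theorem orthant_mono (A : Finset ι) : Monotone (orthant A) := fun _ _ h =>
  ⟨Finset.inter_subset_inter_right h, Finset.sdiff_subset_sdiff h subset_rfl⟩

theorem isSignVector_orthant (A : Finset ι) {T : Finset ι} (hT : T.Nonempty) :
    IsSignVector (orthant A T) := by
  refine ⟨(Finset.disjoint_sdiff_inter T A).symm, fun h => hT.ne_empty ?_⟩
  rw [← Finset.sdiff_union_inter T A, show T ∩ A = ∅ from congrArg Prod.fst h,
    show T \ A = ∅ from congrArg Prod.snd h, Finset.union_empty]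

theorem orthant_sdiff {S T : Finset ι} (A : Finset ι) (hT : T ⊆ S) :
    orthant (S \ A) T = (orthant A T).swap := by
  ext i <;> simp only [orthant, Prod.swap, Finset.mem_inter, Finset.mem_sdiff] <;>
    have := @hT i <;> tauto

theorem orthant_insert {i : ι} {T : Finset ι} (A : Finset ι) (hi : i ∉ T) :
    orthant (insert i A) T = orthant A T := by
  simp only [orthant, Finset.inter_insert_of_notMem hi, Finset.sdiff_insert_of_notMem hi]

theorem isSignFlag_map_orthant (A : Finset ι) {k : ℕ} {S : Finset ι} {c : Multiset (Finset ι)}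
    (hc : c ∈ flags k S) : IsSignFlag (c.map (orthant A)) := by
  simp only [IsSignFlag, Multiset.forall_mem_map_iff]
  exact ⟨fun T hT => isSignVector_orthant A (nonempty_and_subset_of_mem_flags hc hT).1,
    fun T hT U hU => (subset_or_subset_of_mem_flags hc hT hU).imp
      (fun h => orthant_mono A h) fun h => orthant_mono A h⟩

/-- The sum of a cochain over the flags with `k` members in one orthant, from the support `S`
downwards. -/
def orthantSum [AddCommMonoid R] (G : Multiset (Finset ι × Finset ι) → R) (k : ℕ)
    (A S : Finset ι) : R :=
  ((flags k S).map fun c => G (c.map (orthant A))).sum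

/-- The sum of a cochain over the facets of the octahedron with coordinates in `S`. -/
def octahedronSum [AddCommMonoid R] (G : Multiset (Finset ι × Finset ι) → R) (S : Finset ι) : R :=
  ∑ A ∈ S.powerset, orthantSum G S.card A S

theorem orthantSum_insert [AddCommMonoid R] (G : Multiset (Finset ι × Finset ι) → R) (k : ℕ)
    {i : ι} {S : Finset ι} (A : Finset ι) (hi : i ∉ S) :
    orthantSum G k (insert i A) S = orthantSum G k A S := by
  unfold orthantSum
  congr 1
  refine Multiset.map_congr rfl fun c hc => ?_
  congr 1
  exact Multiset.map_congr rfl fun T hT =>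
    orthant_insert A fun h => hi ((nonempty_and_subset_of_mem_flags hc hT).2 h)

theorem orthantSum_sdiff [AddCommMonoid R] (G : Multiset (Finset ι × Finset ι) → R) (k : ℕ)
    (A S : Finset ι) :
    orthantSum G k (S \ A) S = orthantSum (fun c => G (c.map Prod.swap)) k A S := by
  unfold orthantSum
  congr 1
  refine Multiset.map_congr rfl fun c hc => ?_
  simp only [Multiset.map_map, Function.comp_apply]
  congr 1
  exact Multiset.map_congr rfl fun T hT =>
    orthant_sdiff A (nonempty_and_subset_of_mem_flags hc hT).2

variable [Semiring R] [CharP R 2] {G : Multiset (Finset ι × Finset ι) → R}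

theorem orthantSum_add_orthantSum_sdiff
    (hG : ∀ c, IsSignFlag c → coboundary G c = G c + G (c.map Prod.swap)) (k : ℕ)
    (A S : Finset ι) :
    orthantSum G (k + 1) A S + orthantSum G (k + 1) (S \ A) S
      = ∑ i ∈ S, orthantSum G k A (S.erase i) := by
  rw [orthantSum_sdiff]
  unfold orthantSum
  rw [← Multiset.sum_map_add, ← sum_flags_coboundary]
  congr 1
  refine Multiset.map_congr rfl fun c hc => ?_
  rw [← coboundary_map, hG _ (isSignFlag_map_orthant A hc)]

theorem octahedronSum_insert
    (hG : ∀ c, IsSignFlag c → coboundary G c = G c + G (c.map Prod.swap))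
    {S : Finset ι} {s : ι} (hs : s ∉ S) :
    octahedronSum G (insert s S) = octahedronSum G S := by
  have off_equator_cancel : ∀ i ∈ S,
      ∑ A ∈ S.powerset, orthantSum G S.card A ((insert s S).erase i) = 0 := fun i hi =>
    sum_powerset_eq_zero_of_insert_eq hi _ fun A =>
      orthantSum_insert G S.card A (Finset.notMem_erase i _)
  calc octahedronSum G (insert s S)
      = ∑ A ∈ S.powerset, ∑ i ∈ insert s S,
          orthantSum G S.card A ((insert s S).erase i) := by
        simp only [octahedronSum, sum_powerset_insert_eq_sum_add_compl hs,
          Finset.card_insert_of_notMem hs, orthantSum_add_orthantSum_sdiff hG]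
    _ = ∑ A ∈ S.powerset, orthantSum G S.card A ((insert s S).erase s) := by
        rw [Finset.sum_comm, Finset.sum_insert hs, Finset.sum_eq_zero off_equator_cancel, add_zero]
    _ = octahedronSum G S := by rw [Finset.erase_insert hs, octahedronSum]

theorem octahedronSum_eq
    (hG : ∀ c, IsSignFlag c → coboundary G c = G c + G (c.map Prod.swap)) (S : Finset ι) :
    octahedronSum G S = G 0 := by
  induction S using Finset.induction_on with
  | empty => simp [octahedronSum, orthantSum, flags]
  | insert s S hs ih => rw [octahedronSum_insert hG hs, ih]

end OctahedronFlags

section KyFan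

variable {ι : Type*} [DecidableEq ι] {lam : Finset ι × Finset ι → ℤ}

theorem IsSignFlag.complementFree_map
    (hlam : ∀ v w, IsSignVector v → IsSignVector w → v ≤ w → lam v ≠ -lam w)
    {c : Multiset (Finset ι × Finset ι)} (hc : IsSignFlag c) : ComplementFree (c.map lam) := by
  simp only [ComplementFree, Multiset.forall_mem_map_iff]
  intro v hv w hw
  rcases hc.2 v hv w hw with hvw | hwv
  · exact hlam v w (hc.1 v hv) (hc.1 w hw) hvw
  · exact fun h => hlam w v (hc.1 w hw) (hc.1 v hv) hwv (neg_eq_iff_eq_neg.2 h).symm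

theorem octahedronSum_alternation_eq_one
    (hanti : ∀ v, IsSignVector v → lam v.swap = -lam v)
    (hlam : ∀ v w, IsSignVector v → IsSignVector w → v ≤ w → lam v ≠ -lam w) (S : Finset ι) :
    octahedronSum (fun c => alternation 0 (c.map lam)) S = 1 := by
  rw [octahedronSum_eq _ S, Multiset.map_zero, alternation_zero]
  intro c hc
  have map_swap : (c.map Prod.swap).map lam = (c.map lam).map Neg.neg := by
    rw [Multiset.map_map, Multiset.map_map]
    exact Multiset.map_congr rfl fun v hv => hanti v (hc.1 v hv)
  rw [← coboundary_map, coboundary_alternation_zero (hc.complementFree_map hlam), map_swap]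

theorem exists_isSignFlag_nodup_natAbs
    (hanti : ∀ v, IsSignVector v → lam v.swap = -lam v)
    (hlam : ∀ v w, IsSignVector v → IsSignVector w → v ≤ w → lam v ≠ -lam w) (S : Finset ι) :
    ∃ c, IsSignFlag c ∧ c.card = S.card ∧ (c.map fun v => (lam v).natAbs).Nodup := by
  have hsum : octahedronSum (fun c => alternation 0 (c.map lam)) S ≠ 0 := by
    rw [octahedronSum_alternation_eq_one hanti hlam S]
    exact one_ne_zero
  obtain ⟨A, -, hA⟩ := Finset.exists_ne_zero_of_sum_ne_zero hsum
  obtain ⟨c, hc, hne⟩ : ∃ c ∈ flags S.card S,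
      alternation 0 ((c.map (orthant A)).map lam) ≠ 0 := by
    contrapose! hA
    rw [orthantSum, Multiset.map_congr rfl hA, Multiset.sum_map_zero]
  have hflag := isSignFlag_map_orthant A hc
  refine ⟨c.map (orthant A), hflag, by rw [Multiset.card_map, card_of_mem_flags hc], ?_⟩
  simpa only [Multiset.map_map, Function.comp_def] using
    nodup_natAbs_of_alternation_ne_zero (hflag.complementFree_map hlam) hne

end KyFan

end OctahedralTucker

open OctahedralTucker in
theorem octahedral_tucker_general {ι : Type*} [Fintype ι] {K : Finset ℕ}
    (hK : K.card < Fintype.card ι) (lam : Finset ι → Finset ι → ℤ)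
    (hrange : ∀ A B : Finset ι, Disjoint A B → ¬(A = ∅ ∧ B = ∅) → (lam A B).natAbs ∈ K)
    (hanti : ∀ A B : Finset ι, Disjoint A B → ¬(A = ∅ ∧ B = ∅) → lam A B = -lam B A) :
    ∃ A₁ B₁ A₂ B₂ : Finset ι, ¬(A₁ = ∅ ∧ B₁ = ∅) ∧
      Disjoint A₁ B₁ ∧ Disjoint A₂ B₂ ∧ A₁ ⊆ A₂ ∧ B₁ ⊆ B₂ ∧ lam A₁ B₁ = -lam A₂ B₂ := by
  classical
  by_contra hcon
  have ne_bot {v : Finset ι × Finset ι} (hv : IsSignVector v) : ¬(v.1 = ∅ ∧ v.2 = ∅) :=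
    fun h => hv.2 (Prod.ext h.1 h.2)
  obtain ⟨c, hc, hcard, hnodup⟩ := exists_isSignFlag_nodup_natAbs (lam := fun v => lam v.1 v.2)
    (fun v hv => (neg_eq_iff_eq_neg.2 (hanti v.1 v.2 hv.1 (ne_bot hv))).symm)
    (fun v w hv hw hvw h =>
      hcon ⟨v.1, v.2, w.1, w.2, ne_bot hv, hv.1, hw.1, hvw.1, hvw.2, h⟩) Finset.univ
  have labels_le : c.map (fun v => (lam v.1 v.2).natAbs) ≤ K.val :=
    (Multiset.le_iff_subset hnodup).2 <| Multiset.forall_mem_map_iff.2 fun v hv =>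
      hrange v.1 v.2 (hc.1 v hv).1 (ne_bot (hc.1 v hv))
  have := Multiset.card_le_card labels_le
  rw [Multiset.card_map, hcard] at this
  exact hK.not_ge this

/-- **Octahedral Tucker lemma.** Let `n ≥ 2`. The octahedral ball `Bⁿ` consists of all
pairs `(A,B)` of disjoint subsets of `[n]`. If `λ : Bⁿ → {1, ±2, …, ±n}` is antipodal,
i.e. `λ(∅,∅) = 1` and `λ(A,B) = -λ(B,A)` for all other pairs, then there exist two
complementary elements of `Bⁿ`: pairs `(A₁,B₁)`, `(A₂,B₂)` with `A₁ ⊆ A₂`, `B₁ ⊆ B₂`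
and `λ(A₁,B₁) = -λ(A₂,B₂)`. -/
theorem octahedral_tucker (n : ℕ) (hn : 2 ≤ n)
    (lam : Finset (Fin n) → Finset (Fin n) → ℤ)
    (hrange : ∀ A B : Finset (Fin n), Disjoint A B →
      1 ≤ (lam A B).natAbs ∧ (lam A B).natAbs ≤ n ∧ lam A B ≠ -1)
    (hone : lam ∅ ∅ = 1)
    (hanti : ∀ A B : Finset (Fin n), Disjoint A B → ¬(A = ∅ ∧ B = ∅) →
      lam A B = - lam B A) :
    ∃ A₁ B₁ A₂ B₂ : Finset (Fin n),
      Disjoint A₁ B₁ ∧ Disjoint A₂ B₂ ∧ A₁ ⊆ A₂ ∧ B₁ ⊆ B₂ ∧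
      lam A₁ B₁ = - lam A₂ B₂ := by
  have labels_mem (A B : Finset (Fin n)) (hAB : Disjoint A B) (hne : ¬(A = ∅ ∧ B = ∅)) :
      (lam A B).natAbs ∈ Finset.Icc 2 n := by
    grind [hrange A B hAB, hrange B A hAB.symm, hanti A B hAB hne]
  have card_labels : (Finset.Icc 2 n).card < Fintype.card (Fin n) := by
    simp only [Nat.card_Icc, Fintype.card_fin]
    lia
  obtain ⟨A₁, B₁, A₂, B₂, -, h⟩ := octahedral_tucker_general card_labels lam labels_mem hanti
  exact ⟨A₁, B₁, A₂, B₂, h⟩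
end

section
/- (Truncated Tucker lemma) Let n ≥ 2k > 1. If λ : B^n_k → {±2k, …, ±n} is antipodal, then there exist two elements of B^n_k that are k-complementary with respect to λ. -/
/-- `leastK k A` is the set `A_{≤k}` of the `k` least elements of `A`
(all of `A` if `|A| ≤ k`; in particular `∅_{≤k} = ∅`). -/
def leastK {n : ℕ} (k : ℕ) (A : Finset (Fin n)) : Finset (Fin n) :=
  ((A.sort (· ≤ ·)).take k).toFinset

/-- The relation `A₁ ≼ A₂` defined by `(A₁ ∪ A₂)_{≤k} = A₂`. -/
def precRel {n : ℕ} (k : ℕ) (A₁ A₂ : Finset (Fin n)) : Prop :=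
  leastK k (A₁ ∪ A₂) = A₂

/-- Membership in the truncated octahedral ball `Bⁿ_k`: `A` and `B` are each a
`k`-element subset of `[n]` or empty, are disjoint, and are not both empty. -/
def memBnk {n : ℕ} (k : ℕ) (A B : Finset (Fin n)) : Prop :=
  (A.card = k ∨ A = ∅) ∧ (B.card = k ∨ B = ∅) ∧ Disjoint A B ∧ ¬(A = ∅ ∧ B = ∅)

/-- The pair order `(A₁,B₁) ≼ (A₂,B₂)`: `A₁ ≼ A₂`, `B₁ ≼ B₂`, and `Aᵢ ∩ Bⱼ = ∅`
for all `i,j ∈ {1,2}`. -/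
def precPair {n : ℕ} (k : ℕ) (A₁ B₁ A₂ B₂ : Finset (Fin n)) : Prop :=
  precRel k A₁ A₂ ∧ precRel k B₁ B₂ ∧
    Disjoint A₁ B₁ ∧ Disjoint A₁ B₂ ∧ Disjoint A₂ B₁ ∧ Disjoint A₂ B₂

/-!
A simplicial sphere is built from sign vectors by iterated suspension: coning the sphere `S` on
the first coordinates in direction `i` gives a hemisphere with boundary `S` modulo two, and this
hemisphere together with its antipode is the next sphere. For an antipodal labelling without
complementary comparable pairs, let `p` be the cochain marking the flags whose labels, sorted by
absolute value, alternate in sign starting with `+`. Deleting one entry of a list of signs in all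
possible ways shows that the coboundary of `p` is `p` plus the antipode of `p`, so by Stokes the
sum of `p` over each sphere equals its sum over the previous one, hence equals `1`. Thus a full flag
with alternating labels exists (Ky Fan), and its labels have distinct absolute values, which gives
the octahedral Tucker lemma. In the truncated case, label the sign vectors with fewer than `k`
positive and fewer than `k` negative entries by `±` the size of their support: this uses up the
absolute values `1, …, 2k - 2`, comparable ones are never complementary, and the value `2k - 1`
is left unused.
-/

open Finset

namespace TruncatedTucker

section Cochain

variable {V W : Type*}

/-- The coboundary of a cochain modulo two on ordered simplices, which are lists of vertices. -/
def coboundary (f : List V → ZMod 2) (L : List V) : ZMod 2 :=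
  ∑ i ∈ range L.length, f (L.eraseIdx i)

lemma coboundary_nil (f : List V → ZMod 2) : coboundary f [] = 0 := rfl

lemma coboundary_cons (f : List V → ZMod 2) (x : V) (L : List V) :
    coboundary f (x :: L) = f L + coboundary (fun M => f (x :: M)) L := by
  simp [coboundary, sum_range_succ', add_comm]

lemma coboundary_add (f g : List V → ZMod 2) (L : List V) :
    coboundary (fun M => f M + g M) L = coboundary f L + coboundary g L :=
  sum_add_distrib

lemma coboundary_map (h : V → W) (f : List W → ZMod 2) (L : List V) :
    coboundary f (L.map h) = coboundary (fun M => f (M.map h)) L := by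
  simp [coboundary, List.eraseIdx_map]

lemma coboundary_coe [DecidableEq V] (f : Multiset V → ZMod 2) (L : List V) :
    coboundary (fun M => f M) L =
      ((L : Multiset V).map fun a => f ((L : Multiset V).erase a)).sum := by
  rw [coboundary, sum_range, Multiset.map_coe, Multiset.sum_coe, ← Fin.sum_univ_fun_getElem]
  refine sum_congr rfl fun i _ => ?_
  rw [Multiset.coe_erase, Multiset.coe_eq_coe.mpr (List.erase_getElem i.2)]

/-- The prism operator of `t`, followed by a cone with apex `e`: on a chain of vertices it returns
the simplices `[t x₁, …, t xᵢ, xᵢ, …, xₘ]` and `[t x₁, …, t xₘ, e]`. -/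
def prism (t : V → V) (e : V) : List V → Multiset (List V)
  | [] => {[e]}
  | x :: L => (t x :: x :: L) ::ₘ (prism t e L).map (t x :: ·)

lemma length_of_mem_prism {t : V → V} {e : V} {L M : List V} (hM : M ∈ prism t e L) :
    M.length = L.length + 1 := by
  induction L generalizing M with
  | nil => simp_all [prism]
  | cons x L ih =>
    rcases Multiset.mem_cons.mp hM with rfl | hM
    · rfl
    · obtain ⟨N, hN, rfl⟩ := Multiset.mem_map.mp hM
      simp [ih hN]

lemma eq_or_of_mem_prism {t : V → V} {e : V} {L M : List V} (hM : M ∈ prism t e L)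
    {y : V} (hy : y ∈ M) : y = e ∨ y ∈ L ∨ ∃ x ∈ L, y = t x := by
  induction L generalizing M with
  | nil => simp_all [prism]
  | cons x L ih =>
    rcases Multiset.mem_cons.mp hM with rfl | hM
    · simp only [List.mem_cons, exists_eq_or_imp] at hy ⊢
      tauto
    · obtain ⟨N, hN, rfl⟩ := Multiset.mem_map.mp hM
      rcases List.mem_cons.mp hy with rfl | hy
      · simp
      · have := ih hN hy
        simp only [List.mem_cons, exists_eq_or_imp]
        tauto

lemma pairwise_of_mem_prism {r : V → V → Prop} {t : V → V} {e : V} {L M : List V}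
    (he : ∀ x ∈ L, r (t x) e) (hself : ∀ x ∈ L, r (t x) x)
    (hleft : ∀ x ∈ L, ∀ y ∈ L, r x y → r (t x) y) (hmap : ∀ x y, r x y → r (t x) (t y))
    (hL : L.Pairwise r) (hM : M ∈ prism t e L) : M.Pairwise r := by
  induction L generalizing M with
  | nil => simp_all [prism]
  | cons x L ih =>
    simp only [List.forall_mem_cons, List.pairwise_cons] at he hself hleft hL
    rcases Multiset.mem_cons.mp hM with rfl | hM
    · simp only [List.pairwise_cons, List.forall_mem_cons]
      exact ⟨⟨hself.1, fun y hy => hleft.1.2 y hy (hL.1 y hy)⟩, hL⟩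
    · obtain ⟨N, hN, rfl⟩ := Multiset.mem_map.mp hM
      refine List.pairwise_cons.mpr ⟨fun y hy => ?_,
        ih he.2 hself.2 (fun a ha => (hleft.2 a ha).2) hL.2 hN⟩
      rcases eq_or_of_mem_prism hN hy with rfl | hyL | ⟨z, hz, rfl⟩
      · exact he.1
      · exact hleft.1.2 y hyL (hL.1 y hyL)
      · exact hmap x z (hL.1 z hz)

/-- Only the base remains of the two ends of the prism, since the top of the prism is cancelled by
the base of the cone over it. -/
lemma sum_prism_coboundary (t : V → V) (e : V) (f : List V → ZMod 2) (L : List V) :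
    ((prism t e L).map (coboundary f)).sum =
      f L + coboundary (fun M => ((prism t e M).map f).sum) L := by
  induction L generalizing f with
  | nil => simp [prism, coboundary_cons, coboundary_nil]
  | cons x L ih =>
    simp only [prism, Multiset.map_cons, Multiset.sum_cons, Multiset.map_map, Function.comp_def,
      coboundary_cons, Multiset.sum_map_add, coboundary_add, ih]
    linear_combination CharTwo.add_self_eq_zero (f (t x :: L))

end Cochain

section Sphere

variable {ι : Type*}

/-- The order on sign vectors generated by replacing zeros by signs; it is the product order on
the pairs of the set of positive and the set of negative coordinates. -/
def Conforms (x y : ι → SignType) : Prop := ∀ i, x i ≠ 0 → x i = y i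

lemma Conforms.refl (x : ι → SignType) : Conforms x x := fun _ _ => rfl

lemma Conforms.neg {x y : ι → SignType} (h : Conforms x y) : Conforms (-x) (-y) := by
  intro i hi
  simpa using h i (by simpa using hi)

lemma conforms_zero (x : ι → SignType) : Conforms 0 x := fun _ h => absurd rfl h

/-- A maximal chain of nonzero sign vectors supported on the coordinates in `l`, listed from the
largest to the smallest. -/
structure IsFlag (l : List ι) (L : List (ι → SignType)) : Prop where
  pairwise : L.Pairwise fun x y => Conforms y x
  ne_zero : ∀ x ∈ L, x ≠ 0
  eq_zero_of_notMem : ∀ x ∈ L, ∀ i ∉ l, x i = 0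
  length_eq : L.length = l.length

lemma IsFlag.map_neg {l : List ι} {L : List (ι → SignType)} (h : IsFlag l L) :
    IsFlag l (L.map Neg.neg) where
  pairwise := List.pairwise_map.mpr (h.pairwise.imp Conforms.neg)
  ne_zero := List.forall_mem_map.mpr fun x hx hneg =>
    h.ne_zero x hx (funext fun i => by simpa using congrFun hneg i)
  eq_zero_of_notMem := List.forall_mem_map.mpr fun x hx i hi => by
    simp [h.eq_zero_of_notMem x hx i hi]
  length_eq := by simpa using h.length_eq

lemma IsFlag.conforms_or_conforms {l : List ι} {L : List (ι → SignType)} (h : IsFlag l L)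
    {x y : ι → SignType} (hx : x ∈ L) (hy : y ∈ L) : Conforms x y ∨ Conforms y x := by
  have hsymm : Std.Symm fun x y : ι → SignType => Conforms x y ∨ Conforms y x :=
    ⟨fun _ _ => Or.symm⟩
  have hpairwise : L.Pairwise fun x y => Conforms x y ∨ Conforms y x := h.pairwise.imp Or.inr
  exact List.Pairwise.forall_of_forall (R := fun x y => Conforms x y ∨ Conforms y x)
    (fun x _ => Or.inl (.refl x)) hpairwise hx hy

variable [DecidableEq ι]

lemma Conforms.update {x y : ι → SignType} (h : Conforms x y) (i : ι) (s : SignType) :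
    Conforms (Function.update x i s) (Function.update y i s) := by
  intro j
  by_cases hj : j = i
  · simp [hj]
  · simpa [hj] using h j

lemma Conforms.update_right {x y : ι → SignType} (h : Conforms x y) {i : ι} (hi : x i = 0)
    (s : SignType) : Conforms x (Function.update y i s) := by
  intro j hj
  have hji : j ≠ i := by rintro rfl; exact hj hi
  simpa [hji] using h j hj

/-- The cone in direction `i` over a chain of ordered simplices of sign vectors. -/
def cone (i : ι) (C : Multiset (List (ι → SignType))) : Multiset (List (ι → SignType)) :=
  C.bind (prism (Function.update · i 1) (Function.update 0 i 1))

/-- The fundamental cycle modulo two of the sphere of nonzero sign vectors supported on the given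
coordinates, as the multiset of its ordered simplices. -/
def sphere : List ι → Multiset (List (ι → SignType))
  | [] => {[]}
  | i :: l => cone i (sphere l) + (cone i (sphere l)).map (List.map Neg.neg)

lemma sum_sphere_cons (i : ι) (l : List ι) (f : List (ι → SignType) → ZMod 2) :
    ((sphere (i :: l)).map f).sum =
      ((cone i (sphere l)).map fun L => f L + f (L.map Neg.neg)).sum := by
  simp [sphere]

lemma sum_sphere_map_neg (l : List ι) (f : List (ι → SignType) → ZMod 2) :
    ((sphere l).map fun L => f (L.map Neg.neg)).sum = ((sphere l).map f).sum := by
  cases l with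
  | nil => simp [sphere]
  | cons i l =>
    simp only [sum_sphere_cons, List.map_map, Function.comp_def, neg_neg, List.map_id_fun', id,
      add_comm]

lemma sum_cone_coboundary {C : Multiset (List (ι → SignType))}
    (hC : ∀ f, (C.map (coboundary f)).sum = 0) (i : ι) (f : List (ι → SignType) → ZMod 2) :
    ((cone i C).map (coboundary f)).sum = (C.map f).sum := by
  simp only [cone, Multiset.map_bind, Multiset.sum_bind, sum_prism_coboundary,
    Multiset.sum_map_add, hC, add_zero]

lemma sum_sphere_coboundary (l : List ι) (f : List (ι → SignType) → ZMod 2) :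
    ((sphere l).map (coboundary f)).sum = 0 := by
  induction l generalizing f with
  | nil => simp [sphere, coboundary_nil]
  | cons i l ih =>
    simp only [sum_sphere_cons, Multiset.sum_map_add, coboundary_map, sum_cone_coboundary ih,
      sum_sphere_map_neg, CharTwo.add_self_eq_zero]

lemma IsFlag.of_mem_prism {i : ι} {l : List ι} {L M : List (ι → SignType)} (hi : i ∉ l)
    (hL : IsFlag l L) (hM : M ∈ prism (Function.update · i 1) (Function.update 0 i 1) L) :
    IsFlag (i :: l) M where
  pairwise := by
    have hzero : ∀ x ∈ L, x i = 0 := fun x hx => hL.eq_zero_of_notMem x hx i hi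
    exact pairwise_of_mem_prism (fun x _ => (conforms_zero x).update i 1)
      (fun x hx => (Conforms.refl x).update_right (hzero x hx) 1)
      (fun x _ y hy h => h.update_right (hzero y hy) 1) (fun _ _ h => h.update i 1) hL.pairwise hM
  ne_zero := by
    have update_ne_zero (x : ι → SignType) : Function.update x i 1 ≠ 0 := fun h => by
      simpa using congrFun h i
    intro y hy
    rcases eq_or_of_mem_prism hM hy with rfl | hyL | ⟨x, -, rfl⟩
    · exact update_ne_zero 0
    · exact hL.ne_zero y hyL
    · exact update_ne_zero x
  eq_zero_of_notMem := by
    intro y hy j hj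
    obtain ⟨hji, hjl⟩ := not_or.mp (mt List.mem_cons.mpr hj)
    rcases eq_or_of_mem_prism hM hy with rfl | hyL | ⟨x, hx, rfl⟩
    · simp [hji]
    · exact hL.eq_zero_of_notMem y hyL j hjl
    · simpa [hji] using hL.eq_zero_of_notMem x hx j hjl
  length_eq := by rw [length_of_mem_prism hM, hL.length_eq, List.length_cons]

lemma isFlag_of_mem_cone {i : ι} {l : List ι} {C : Multiset (List (ι → SignType))} (hi : i ∉ l)
    (hC : ∀ L ∈ C, IsFlag l L) {M : List (ι → SignType)} (hM : M ∈ cone i C) :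
    IsFlag (i :: l) M := by
  obtain ⟨L, hL, hM⟩ := Multiset.mem_bind.mp hM
  exact (hC L hL).of_mem_prism hi hM

lemma isFlag_of_mem_sphere {l : List ι} (hl : l.Nodup) :
    ∀ L ∈ sphere l, IsFlag l L := by
  induction l with
  | nil => simpa [sphere] using ⟨by simp, by simp, by simp, rfl⟩
  | cons i l ih =>
    obtain ⟨hi, hl⟩ := List.nodup_cons.mp hl
    intro L hL
    rcases Multiset.mem_add.mp hL with hL | hL
    · exact isFlag_of_mem_cone hi (ih hl) hL
    · obtain ⟨M, hM, rfl⟩ := Multiset.mem_map.mp hL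
      exact (isFlag_of_mem_cone hi (ih hl) hM).map_neg

/-- The mod two index of a cochain whose coboundary is its symmetrization does not depend on the
dimension of the sphere. -/
lemma sum_sphere_eq {p : List (ι → SignType) → ZMod 2}
    (hp : ∀ l L, IsFlag l L → coboundary p L = p L + p (L.map Neg.neg))
    {l : List ι} (hl : l.Nodup) : ((sphere l).map p).sum = p [] := by
  induction l with
  | nil => simp [sphere]
  | cons i l ih =>
    obtain ⟨hi, hl⟩ := List.nodup_cons.mp hl
    have hcone : ∀ L ∈ cone i (sphere l), p L + p (L.map Neg.neg) = coboundary p L :=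
      fun L hL => (hp _ L (isFlag_of_mem_cone hi (isFlag_of_mem_sphere hl) hL)).symm
    rw [sum_sphere_cons, Multiset.map_congr rfl hcone,
      sum_cone_coboundary (sum_sphere_coboundary l), ih hl]

end Sphere

section Alternation

/-- The indicator of the lists of signs that alternate after a first sign different from `b`. -/
def alternation (b : Bool) (L : List Bool) : ZMod 2 := if (b :: L).IsChain (· ≠ ·) then 1 else 0

lemma alternation_cons (b s : Bool) (L : List Bool) :
    alternation b (s :: L) = if b ≠ s then alternation s L else 0 := by
  simp only [alternation, List.isChain_cons_cons]
  split_ifs <;> tauto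

lemma alternation_map_not (b : Bool) (L : List Bool) :
    alternation b (L.map not) = alternation (!b) L := by
  induction L generalizing b with
  | nil => simp [alternation]
  | cons s L ih => cases b <;> cases s <;> simp [alternation_cons, ih]

lemma coboundary_alternation (b : Bool) (L : List Bool) :
    coboundary (alternation b) L = alternation b L + alternation (!b) L := by
  induction L generalizing b with
  | nil => simp [coboundary_nil, alternation, CharTwo.add_self_eq_zero]
  | cons s L ih =>
    have hcons : coboundary (alternation b) (s :: L) = alternation b L +
        if b ≠ s then alternation s L + alternation (!s) L else 0 := by
      simp only [coboundary_cons, alternation_cons]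
      split_ifs
      · rw [← ih s]
      · simp [coboundary]
    rw [hcons, alternation_cons, alternation_cons]
    by_cases hs : b = s
    · simp [hs]
    · obtain rfl : s = !b := Bool.eq_not_iff.mpr (Ne.symm hs)
      simp only [Bool.not_not, ne_eq, hs, not_false_eq_true, if_true, not_true_eq_false, if_false]
      linear_combination CharTwo.add_self_eq_zero (alternation b L)

variable {α : Type*}

/-- Signed labels `(a, s)`, with absolute value `a` and sign `s`, are ordered by absolute value
first; this is the label with the opposite sign. -/
def opposite (a : α ×ₗ Bool) : α ×ₗ Bool := toLex ((ofLex a).1, !(ofLex a).2)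

lemma opposite_opposite (a : α ×ₗ Bool) : opposite (opposite a) = a := by
  simp [opposite]

/-- The condition that a list of signed labels does not contain two opposite ones. -/
def NoOpposites (L : List (α ×ₗ Bool)) : Prop :=
  ∀ a ∈ L, ∀ b ∈ L, a ≠ opposite b

lemma NoOpposites.eq_of_fst_eq {L : List (α ×ₗ Bool)} (h : NoOpposites L) {a b : α ×ₗ Bool}
    (ha : a ∈ L) (hb : b ∈ L) (hab : (ofLex a).1 = (ofLex b).1) : a = b := by
  by_contra hne
  refine h a ha b hb (Prod.ext hab ?_)
  have hsnd : (ofLex a).2 ≠ (ofLex b).2 := fun h => hne (Prod.ext hab h)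
  exact Bool.eq_not_iff.mpr hsnd

variable [LinearOrder α]

/-- The signs of a list of labels sorted by absolute value. -/
def sortedSigns (L : List (α ×ₗ Bool)) : List Bool :=
  ((L : Multiset (α ×ₗ Bool)).sort).map fun a => (ofLex a).2

lemma coboundary_sort {β : Type*} [LinearOrder β] (f : List β → ZMod 2) (L : List β) :
    coboundary (fun M => f ((M : Multiset β).sort)) L =
      coboundary f ((L : Multiset β).sort) := by
  set S := (L : Multiset β).sort with hS
  have hsorted : coboundary (fun M => f ((M : Multiset β).sort)) S = coboundary f S := by
    refine sum_congr rfl fun i _ => congrArg f ?_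
    rw [Multiset.coe_sort]
    refine List.mergeSort_of_pairwise ?_
    simpa using ((L : Multiset β).pairwise_sort (· ≤ ·)).sublist (S.eraseIdx_sublist i)
  let g (s : Multiset β) : ZMod 2 := f (s.sort (· ≤ ·))
  calc coboundary (fun M => g M) L = coboundary (fun M => g M) S := by
        rw [coboundary_coe, coboundary_coe, hS, Multiset.sort_eq]
    _ = coboundary f S := hsorted

lemma coboundary_alternation_sortedSigns (b : Bool) (L : List (α ×ₗ Bool)) :
    coboundary (fun M => alternation b (sortedSigns M)) L =
      alternation b (sortedSigns L) + alternation (!b) (sortedSigns L) := by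
  unfold sortedSigns
  rw [coboundary_sort (fun M => alternation b (M.map _)), ← coboundary_map,
    coboundary_alternation]

lemma NoOpposites.sortedSigns_map_opposite {L : List (α ×ₗ Bool)} (h : NoOpposites L) :
    sortedSigns (L.map opposite) = (sortedSigns L).map not := by
  have hmono : ∀ a ∈ (L : Multiset (α ×ₗ Bool)), ∀ b ∈ (L : Multiset (α ×ₗ Bool)),
      a ≤ b ↔ opposite a ≤ opposite b := by
    intro a ha b hb
    by_cases hab : (ofLex a).1 = (ofLex b).1
    · simp [h.eq_of_fst_eq ha hb hab]
    · simp [Prod.Lex.le_iff, opposite, hab]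
  rw [sortedSigns, ← Multiset.map_coe, ← Multiset.map_sort _ _ _ _ hmono]
  simp [sortedSigns, Function.comp_def, opposite]

lemma NoOpposites.length_le_of_isChain {L : List (α ×ₗ Bool)} (h : NoOpposites L)
    (halt : (sortedSigns L).IsChain (· ≠ ·)) {S : Finset α} (hS : ∀ a ∈ L, (ofLex a).1 ∈ S) :
    L.length ≤ #S := by
  set M := (L : Multiset (α ×ₗ Bool)).sort with hM
  have hperm : M.Perm L := Multiset.coe_eq_coe.mp (Multiset.sort_eq _ _)
  have hlt : (M.map fun a => (ofLex a).1).IsChain (· < ·) := by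
    refine List.isChain_iff_getElem.mpr fun i hi => ?_
    rw [List.length_map] at hi
    have hle : M[i] ≤ M[i + 1] :=
      ((L : Multiset (α ×ₗ Bool)).pairwise_sort (· ≤ ·)).isChain.getElem i hi
    have hsign : (ofLex M[i]).2 ≠ (ofLex M[i + 1]).2 := by
      simpa [sortedSigns, ← hM] using halt.getElem i (by simpa [sortedSigns, ← hM] using hi)
    rw [List.getElem_map, List.getElem_map]
    refine (Prod.Lex.monotone_fst _ _ hle).lt_of_ne fun hfst => hsign ?_
    rw [h.eq_of_fst_eq (hperm.mem_iff.mp (List.getElem_mem _))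
      (hperm.mem_iff.mp (List.getElem_mem _)) hfst]
  have hsub : (M.map fun a => (ofLex a).1).toFinset ⊆ S := by
    intro a ha
    obtain ⟨b, hb, rfl⟩ := List.mem_map.mp (List.mem_toFinset.mp ha)
    exact hS b (hperm.mem_iff.mp hb)
  calc L.length = #(M.map fun a => (ofLex a).1).toFinset := by
        rw [List.toFinset_card_of_nodup (hlt.pairwise.imp ne_of_lt), List.length_map,
          hperm.length_eq]
    _ ≤ #S := card_le_card hsub

end Alternation

section Tucker

variable {ι : Type*}

lemma IsFlag.noOpposites {α : Type*} {lam : (ι → SignType) → α ×ₗ Bool}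
    (hcompl : ∀ x y, x ≠ 0 → y ≠ 0 → Conforms x y → lam x ≠ opposite (lam y))
    {l : List ι} {L : List (ι → SignType)} (hL : IsFlag l L) : NoOpposites (L.map lam) := by
  refine List.forall_mem_map.mpr fun x hx => List.forall_mem_map.mpr fun y hy h => ?_
  have hx0 := hL.ne_zero x hx
  have hy0 := hL.ne_zero y hy
  rcases hL.conforms_or_conforms hx hy with hxy | hyx
  · exact hcompl x y hx0 hy0 hxy h
  · exact hcompl y x hy0 hx0 hyx (by rw [h, opposite_opposite])

variable [Fintype ι]

/-- **Ky Fan's lemma** for the octahedral sphere. -/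
theorem exists_isFlag_isChain_sortedSigns {α : Type*} [LinearOrder α]
    {lam : (ι → SignType) → α ×ₗ Bool} (hanti : ∀ x, x ≠ 0 → lam (-x) = opposite (lam x))
    (hcompl : ∀ x y, x ≠ 0 → y ≠ 0 → Conforms x y → lam x ≠ opposite (lam y)) :
    ∃ L, IsFlag univ.toList L ∧ (false :: sortedSigns (L.map lam)).IsChain (· ≠ ·) := by
  classical
  let p (L : List (ι → SignType)) : ZMod 2 := alternation false (sortedSigns (L.map lam))
  have hcoboundary (l : List ι) (L : List (ι → SignType)) (hL : IsFlag l L) :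
      coboundary p L = p L + p (L.map Neg.neg) := by
    have hneg : (L.map Neg.neg).map lam = (L.map lam).map opposite := by
      simpa using fun x hx => hanti x (hL.ne_zero x hx)
    simp only [p, hneg, (hL.noOpposites hcompl).sortedSigns_map_opposite,
      alternation_map_not]
    rw [← coboundary_alternation_sortedSigns, coboundary_map]
  have hsum : ((sphere univ.toList).map p).sum = 1 :=
    (sum_sphere_eq hcoboundary (nodup_toList _)).trans (by simp [p, sortedSigns, alternation])
  obtain ⟨L, hL, hp⟩ : ∃ L ∈ sphere univ.toList, p L ≠ 0 := by
    by_contra! hzero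
    rw [Multiset.map_congr rfl hzero] at hsum
    simp at hsum
  exact ⟨L, isFlag_of_mem_sphere (nodup_toList _) L hL, by_contra fun h => hp (if_neg h)⟩

/-- The absolute value and the sign of an integer, as a signed label. -/
def signedLabel (a : ℤ) : ℕ ×ₗ Bool := toLex (a.natAbs, decide (0 < a))

lemma signedLabel_neg {a : ℤ} (ha : a ≠ 0) : signedLabel (-a) = opposite (signedLabel a) := by
  have hsign : decide (0 < -a) = !decide (0 < a) := by
    rw [← decide_not, decide_eq_decide]
    omega
  rw [signedLabel, Int.natAbs_neg, hsign]
  rfl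

lemma signedLabel_injective : Function.Injective signedLabel := by
  intro a b h
  obtain ⟨habs, hsign⟩ := Prod.ext_iff.mp h
  have hpos : 0 < a ↔ 0 < b := decide_eq_decide.mp hsign
  have habs : a.natAbs = b.natAbs := habs
  omega

/-- The **octahedral Tucker lemma**. -/
theorem exists_conforms_eq_neg {lam : (ι → SignType) → ℤ} {S : Finset ℕ}
    (hS : #S < Fintype.card ι) (hmem : ∀ x, x ≠ 0 → (lam x).natAbs ∈ S)
    (hanti : ∀ x, x ≠ 0 → lam (-x) = -lam x) :
    ∃ x y, x ≠ 0 ∧ y ≠ 0 ∧ Conforms x y ∧ lam x = -lam y := by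
  by_contra! hno
  have lam_ne_zero (x : ι → SignType) (hx : x ≠ 0) : lam x ≠ 0 := fun h =>
    hno x x hx hx (.refl x) (by simp [h])
  have hanti' : ∀ x, x ≠ 0 → signedLabel (lam (-x)) = opposite (signedLabel (lam x)) :=
    fun x hx => by rw [hanti x hx, signedLabel_neg (lam_ne_zero x hx)]
  have hcompl : ∀ x y, x ≠ 0 → y ≠ 0 → Conforms x y →
      signedLabel (lam x) ≠ opposite (signedLabel (lam y)) := fun x y hx hy hxy h => by
    rw [← signedLabel_neg (lam_ne_zero y hy)] at h
    exact hno x y hx hy hxy (signedLabel_injective h)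
  obtain ⟨L, hL, halt⟩ := exists_isFlag_isChain_sortedSigns hanti' hcompl
  have hlength := (hL.noOpposites hcompl).length_le_of_isChain halt.tail (S := S)
    (List.forall_mem_map.mpr fun x hx => hmem x (hL.ne_zero x hx))
  rw [List.length_map, hL.length_eq, length_toList, card_univ] at hlength
  exact hS.not_ge hlength

end Tucker

section LeastK

variable {n : ℕ} {k : ℕ} {A B U : Finset (Fin n)}

lemma leastK_subset (k : ℕ) (A : Finset (Fin n)) : leastK k A ⊆ A := fun x hx => by
  simpa using List.mem_of_mem_take (List.mem_toFinset.mp hx)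

lemma card_leastK (h : k ≤ #A) : #(leastK k A) = k := by
  rw [leastK, List.toFinset_card_of_nodup ((A.sort_nodup _).sublist (List.take_sublist _ _))]
  simpa using h

lemma lt_of_mem_leastK {x y : Fin n} (hx : x ∈ leastK k A) (hy : y ∈ A \ leastK k A) : x < y := by
  obtain ⟨hyA, hyk⟩ := mem_sdiff.mp hy
  have hsplit := List.take_append_drop k A.sort
  have hdrop : y ∈ A.sort.drop k := by
    rw [← mem_sort (· ≤ ·), ← hsplit, List.mem_append] at hyA
    exact hyA.resolve_left fun h => hyk (List.mem_toFinset.mpr h)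
  have hsorted := A.pairwise_sort (· ≤ ·)
  rw [← hsplit, List.pairwise_append] at hsorted
  exact (hsorted.2.2 x (List.mem_toFinset.mp hx) y hdrop).lt_of_ne (by rintro rfl; exact hyk hx)

lemma leastK_card_eq_of_forall_lt (hAB : A ⊆ B) (hlt : ∀ x ∈ A, ∀ y ∈ B \ A, x < y) :
    leastK #A B = A := by
  have hsort : B.sort = A.sort ++ (B \ A).sort := by
    have hnodup : (A.sort ++ (B \ A).sort).Nodup :=
      (A.sort_nodup _).append ((B \ A).sort_nodup _) (by simp +contextual [List.disjoint_left])
    have hunion : (A.sort ++ (B \ A).sort).toFinset = B := by simp [union_sdiff_of_subset hAB]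
    have hsorted : (A.sort ++ (B \ A).sort).Pairwise (· ≤ ·) :=
      List.pairwise_append.mpr ⟨A.pairwise_sort _, (B \ A).pairwise_sort _,
        fun x hx y hy => (hlt x ((mem_sort _).mp hx) y ((mem_sort _).mp hy)).le⟩
    rw [← (List.toFinset_sort _ hnodup).mpr hsorted, hunion]
  rw [leastK, hsort, List.take_left' (length_sort _), sort_toFinset]

lemma leastK_eq_of_subset_of_subset (h : k ≤ #A) (hkU : leastK k A ⊆ U) (hUA : U ⊆ A) :
    leastK k U = leastK k A := by
  have hlt : ∀ x ∈ leastK k A, ∀ y ∈ U \ leastK k A, x < y := fun x hx y hy =>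
    lt_of_mem_leastK hx (sdiff_subset_sdiff hUA le_rfl hy)
  simpa only [card_leastK h] using leastK_card_eq_of_forall_lt hkU hlt

/-- The `k` least elements of a set with at least `k` elements, and the empty set for smaller sets;
this projects disjoint pairs of sets to the truncated ball. -/
def truncate (k : ℕ) (A : Finset (Fin n)) : Finset (Fin n) := if k ≤ #A then leastK k A else ∅

lemma truncate_subset (k : ℕ) (A : Finset (Fin n)) : truncate k A ⊆ A := by
  unfold truncate
  split_ifs
  exacts [leastK_subset k A, empty_subset A]

lemma card_truncate_or_eq_empty (k : ℕ) (A : Finset (Fin n)) :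
    #(truncate k A) = k ∨ truncate k A = ∅ := by
  unfold truncate
  split_ifs with h
  exacts [.inl (card_leastK h), .inr rfl]

lemma truncate_ne_empty (hk : 1 ≤ k) (h : k ≤ #A) : truncate k A ≠ ∅ := by
  rw [truncate, if_pos h, ← nonempty_iff_ne_empty, ← card_pos, card_leastK h]
  exact hk

lemma precRel_truncate (h : A ⊆ B) : precRel k (truncate k A) (truncate k B) := by
  unfold precRel
  by_cases hB : k ≤ #B
  · have htruncate : truncate k B = leastK k B := if_pos hB
    rw [htruncate]
    exact leastK_eq_of_subset_of_subset hB subset_union_right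
      (union_subset ((truncate_subset k A).trans h) (leastK_subset k B))
  · have hA : ¬ k ≤ #A := fun hA => hB (hA.trans (card_le_card h))
    simp [truncate, hA, hB, leastK]

lemma memBnk_truncate (hk : 1 ≤ k) (hAB : Disjoint A B) (h : k ≤ #A ∨ k ≤ #B) :
    memBnk k (truncate k A) (truncate k B) :=
  ⟨card_truncate_or_eq_empty k A, card_truncate_or_eq_empty k B,
    hAB.mono (truncate_subset k A) (truncate_subset k B),
    fun ⟨hA, hB⟩ => h.elim (truncate_ne_empty hk · hA) (truncate_ne_empty hk · hB)⟩

lemma precPair_truncate {A₁ B₁ A₂ B₂ : Finset (Fin n)} (hA : A₁ ⊆ A₂) (hB : B₁ ⊆ B₂)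
    (hAB : Disjoint A₂ B₂) :
    precPair k (truncate k A₁) (truncate k B₁) (truncate k A₂) (truncate k B₂) := by
  have hA₁ := (truncate_subset k A₁).trans hA
  have hB₁ := (truncate_subset k B₁).trans hB
  have hA₂ := truncate_subset k A₂
  have hB₂ := truncate_subset k B₂
  exact ⟨precRel_truncate hA, precRel_truncate hB, hAB.mono hA₁ hB₁, hAB.mono hA₁ hB₂,
    hAB.mono hA₂ hB₁, hAB.mono hA₂ hB₂⟩

end LeastK

section Positives

variable {ι : Type*} [Fintype ι] {x y : ι → SignType}

/-- The positive coordinates of a sign vector; the negative ones are `positives (-x)`. -/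
def positives (x : ι → SignType) : Finset ι := {i | x i = 1}

lemma mem_positives {i : ι} : i ∈ positives x ↔ x i = 1 := by simp [positives]

lemma mem_positives_neg {i : ι} : i ∈ positives (-x) ↔ x i = -1 := by
  simp [positives, neg_eq_iff_eq_neg]

lemma disjoint_positives_neg (x : ι → SignType) : Disjoint (positives x) (positives (-x)) := by
  refine disjoint_left.mpr fun i hi hi' => ?_
  rw [mem_positives] at hi
  rw [mem_positives_neg, hi] at hi'
  exact absurd hi' (by decide)

lemma positives_ne_positives_neg (hx : x ≠ 0) : positives x ≠ positives (-x) := by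
  intro h
  have hempty : positives x = ∅ := by simpa [← h] using disjoint_positives_neg x
  refine hx (funext fun i => ?_)
  have hpos : x i ≠ 1 := fun hi => by simpa [hempty] using mem_positives.mpr hi
  have hneg : x i ≠ -1 := fun hi => by simpa [← h, hempty] using mem_positives_neg.mpr hi
  simpa [hpos, hneg] using (x i).trichotomy

lemma Conforms.positives_subset (h : Conforms x y) : positives x ⊆ positives y := fun i hi => by
  rw [mem_positives] at hi ⊢
  rw [← h i (by simp [hi]), hi]

/-- The number of nonzero coordinates of a sign vector, as the sum of the numbers of positive and of
negative ones. -/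
def weight (x : ι → SignType) : ℕ := #(positives x) + #(positives (-x))

lemma weight_neg (x : ι → SignType) : weight (-x) = weight x := by
  rw [weight, weight, neg_neg, add_comm]

lemma weight_pos (hx : x ≠ 0) : 0 < weight x := by
  by_contra! h
  simp only [weight, Nat.le_zero, Nat.add_eq_zero_iff, card_eq_zero] at h
  exact positives_ne_positives_neg hx (h.1.trans h.2.symm)

lemma Conforms.eq_of_weight_le (h : Conforms x y) (hw : weight y ≤ weight x) : x = y := by
  have hpos := card_le_card h.positives_subset
  have hneg := card_le_card h.neg.positives_subset
  unfold weight at hw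
  have hpos_eq : positives x = positives y :=
    eq_of_subset_of_card_le h.positives_subset (by omega)
  have hneg_eq : positives (-x) = positives (-y) :=
    eq_of_subset_of_card_le h.neg.positives_subset (by omega)
  funext i
  by_cases hx : x i = 0
  · have hy_ne_one : y i ≠ 1 := by
      rw [Ne, ← mem_positives, ← hpos_eq, mem_positives, hx]
      decide
    have hy_ne_neg_one : y i ≠ -1 := by
      rw [Ne, ← mem_positives_neg, ← hneg_eq, mem_positives_neg, hx]
      decide
    simpa [hx, hy_ne_one, hy_ne_neg_one, eq_comm] using (y i).trichotomy
  · exact h i hx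

end Positives

section Extension

variable {n k : ℕ} {lam : Finset (Fin n) → Finset (Fin n) → ℤ} {x y : Fin n → SignType}

/-- The sign vectors whose truncation lies in the truncated octahedral ball. -/
def IsLarge (k : ℕ) (x : Fin n → SignType) : Prop := k ≤ #(positives x) ∨ k ≤ #(positives (-x))

lemma isLarge_neg : IsLarge k (-x) ↔ IsLarge k x := by
  rw [IsLarge, neg_neg, or_comm, IsLarge]

lemma IsLarge.memBnk (hk : 1 ≤ k) (hx : IsLarge k x) :
    memBnk k (truncate k (positives x)) (truncate k (positives (-x))) :=
  memBnk_truncate hk (disjoint_positives_neg x) hx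

lemma weight_lt_of_not_isLarge (hx : ¬ IsLarge k x) : weight x < 2 * k - 1 := by
  simp only [IsLarge, not_or, not_le] at hx
  unfold weight
  omega

open Classical in
/-- The extension of a labelling of the truncated octahedral ball to all sign vectors. The
comparison in the colexicographic order serves to choose one vector of each antipodal pair. -/
noncomputable def extendedLabel (k : ℕ) (lam : Finset (Fin n) → Finset (Fin n) → ℤ)
    (x : Fin n → SignType) : ℤ :=
  if IsLarge k x then lam (truncate k (positives x)) (truncate k (positives (-x)))
  else if toColex (positives (-x)) < toColex (positives x) then weight x else -weight x

lemma extendedLabel_of_isLarge (hx : IsLarge k x) :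
    extendedLabel k lam x = lam (truncate k (positives x)) (truncate k (positives (-x))) :=
  if_pos hx

lemma natAbs_extendedLabel_of_not_isLarge (hx : ¬ IsLarge k x) :
    (extendedLabel k lam x).natAbs = weight x := by
  rw [extendedLabel, if_neg hx]
  split_ifs <;> simp

lemma extendedLabel_neg (hk : 1 ≤ k) (hanti : ∀ A B, memBnk k A B → lam A B = -lam B A)
    (hx : x ≠ 0) : extendedLabel k lam (-x) = -extendedLabel k lam x := by
  by_cases hl : IsLarge k x
  · rw [extendedLabel_of_isLarge hl, extendedLabel_of_isLarge (isLarge_neg.mpr hl),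
      hanti _ _ ((isLarge_neg.mpr hl).memBnk hk), neg_neg]
  · have hne : toColex (positives x) ≠ toColex (positives (-x)) :=
      fun h => positives_ne_positives_neg hx (toColex_inj.mp h)
    rw [extendedLabel, extendedLabel, if_neg hl, if_neg (mt isLarge_neg.mp hl), neg_neg,
      weight_neg]
    rcases hne.lt_or_gt with h | h <;> simp [h, h.not_gt]

lemma natAbs_extendedLabel_mem (hk : 1 ≤ k) (hn : 2 * k ≤ n)
    (hrange : ∀ A B, memBnk k A B → 2 * k ≤ (lam A B).natAbs ∧ (lam A B).natAbs ≤ n)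
    (hx : x ≠ 0) : (extendedLabel k lam x).natAbs ∈ (Icc 1 n).erase (2 * k - 1) := by
  rw [mem_erase, mem_Icc]
  by_cases hl : IsLarge k x
  · have := hrange _ _ (hl.memBnk hk)
    rw [extendedLabel_of_isLarge hl]
    omega
  · have hpos := weight_pos hx
    have hlt := weight_lt_of_not_isLarge hl
    rw [natAbs_extendedLabel_of_not_isLarge hl]
    omega

lemma isLarge_iff_le_natAbs_extendedLabel (hk : 1 ≤ k)
    (hrange : ∀ A B, memBnk k A B → 2 * k ≤ (lam A B).natAbs ∧ (lam A B).natAbs ≤ n) :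
    IsLarge k x ↔ 2 * k ≤ (extendedLabel k lam x).natAbs := by
  refine ⟨fun hl => ?_, fun h => by_contra fun hl => ?_⟩
  · rw [extendedLabel_of_isLarge hl]
    exact (hrange _ _ (hl.memBnk hk)).1
  · have hlt := weight_lt_of_not_isLarge hl
    rw [natAbs_extendedLabel_of_not_isLarge hl] at h
    omega

lemma Conforms.isLarge_of_extendedLabel_eq_neg (hk : 1 ≤ k)
    (hrange : ∀ A B, memBnk k A B → 2 * k ≤ (lam A B).natAbs ∧ (lam A B).natAbs ≤ n)
    (hx : x ≠ 0) (hxy : Conforms x y) (h : extendedLabel k lam x = -extendedLabel k lam y) :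
    IsLarge k x ∧ IsLarge k y := by
  have habs : (extendedLabel k lam x).natAbs = (extendedLabel k lam y).natAbs := by
    rw [h, Int.natAbs_neg]
  have hiff : IsLarge k x ↔ IsLarge k y := by
    simp only [isLarge_iff_le_natAbs_extendedLabel hk hrange, habs]
  suffices hl : IsLarge k x from ⟨hl, hiff.mp hl⟩
  by_contra hl
  have hwx := natAbs_extendedLabel_of_not_isLarge (lam := lam) hl
  have hwy := natAbs_extendedLabel_of_not_isLarge (lam := lam) (mt hiff.mpr hl)
  obtain rfl := hxy.eq_of_weight_le (by omega)
  have := weight_pos hx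
  omega

end Extension

end TruncatedTucker

/-- **Truncated Tucker lemma.** Let `n ≥ 2k > 1`. If `λ : Bⁿ_k → {±2k, …, ±n}` is
antipodal, i.e. `λ(A,B) = -λ(B,A)` for all `(A,B) ∈ Bⁿ_k`, then there exist two
`k`-complementary elements of `Bⁿ_k`: pairs with `(A₁,B₁) ≼ (A₂,B₂)` and
`λ(A₁,B₁) = -λ(A₂,B₂)`. -/
theorem truncated_tucker (n k : ℕ) (hk : 1 ≤ k) (hn : 2 * k ≤ n)
    (lam : Finset (Fin n) → Finset (Fin n) → ℤ)
    (hrange : ∀ A B : Finset (Fin n), memBnk k A B →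
      2 * k ≤ (lam A B).natAbs ∧ (lam A B).natAbs ≤ n)
    (hanti : ∀ A B : Finset (Fin n), memBnk k A B → lam A B = - lam B A) :
    ∃ A₁ B₁ A₂ B₂ : Finset (Fin n),
      memBnk k A₁ B₁ ∧ memBnk k A₂ B₂ ∧ precPair k A₁ B₁ A₂ B₂ ∧
      lam A₁ B₁ = - lam A₂ B₂ := by
  open TruncatedTucker in
  have hcard : #((Icc 1 n).erase (2 * k - 1)) < Fintype.card (Fin n) := by
    rw [card_erase_of_mem (by rw [mem_Icc]; omega), Nat.card_Icc, Fintype.card_fin]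
    omega
  obtain ⟨x, y, hx, -, hxy, heq⟩ := exists_conforms_eq_neg hcard
    (fun _ => natAbs_extendedLabel_mem hk hn hrange) (fun _ => extendedLabel_neg hk hanti)
  obtain ⟨hlx, hly⟩ := hxy.isLarge_of_extendedLabel_eq_neg hk hrange hx heq
  rw [extendedLabel_of_isLarge hlx, extendedLabel_of_isLarge hly] at heq
  exact ⟨_, _, _, _, hlx.memBnk hk, hly.memBnk hk,
    precPair_truncate hxy.positives_subset hxy.neg.positives_subset (disjoint_positives_neg y), heq⟩
end

section
/- Let k ≥ 1 and suppose [n] is partitioned into pairwise disjoint nonempty sets T₁, …, T_{n−2k+2}, each of odd cardinality. Then the map c assigning to each k-element subset S of [n] the least index i such that |S ∩ T_i| > |T_i|/2 is well-defined (such an i exists when each |T_i| is either 1 or 3 and exactly k−1 of the T_i have size 3), and c is a proper (n−2k+2)-coloring of the (n,k)-Kneser graph. -/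
/-!
If a `k`-set `S` had a majority in no `T i`, then oddness would make it miss more than half of each
`T i`, that is `2 * |S ∩ T i| + 1 ≤ |T i|`. Summing over the `n - 2 * k + 2` indices `i` would give
`2 * k + (n - 2 * k + 2) ≤ n`, which is absurd. Moreover, two sets with a majority in the same
`T i` meet inside it, so disjoint sets never share a color.
-/

section Majority

variable {ι α : Type*} [DecidableEq α] {I : Finset ι} {T : ι → Finset α}

theorem card_le_sum_card_inter_of_subset_biUnion {S : Finset α} (hS : S ⊆ I.biUnion T) :
    S.card ≤ ∑ i ∈ I, (S ∩ T i).card :=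
  calc
    S.card = (I.biUnion fun i => S ∩ T i).card := by
      rw [← Finset.inter_biUnion, Finset.inter_eq_left.mpr hS]
    _ ≤ ∑ i ∈ I, (S ∩ T i).card := Finset.card_biUnion_le

theorem exists_card_lt_two_mul_card_inter {S : Finset α} (hodd : ∀ i ∈ I, Odd (T i).card)
    (hS : S ⊆ I.biUnion T) (hcard : ∑ i ∈ I, (T i).card < 2 * S.card + I.card) :
    ∃ i ∈ I, (T i).card < 2 * (S ∩ T i).card := by
  have hsum : ∑ i ∈ I, (T i).card < ∑ i ∈ I, (2 * (S ∩ T i).card + 1) :=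
    calc
      ∑ i ∈ I, (T i).card < 2 * S.card + I.card := hcard
      _ ≤ 2 * ∑ i ∈ I, (S ∩ T i).card + I.card := by
        gcongr
        exact card_le_sum_card_inter_of_subset_biUnion hS
      _ = ∑ i ∈ I, (2 * (S ∩ T i).card + 1) := by
        rw [Finset.sum_add_distrib, Finset.mul_sum, Finset.card_eq_sum_ones]
  obtain ⟨i, hi, hlt⟩ := Finset.exists_lt_of_sum_lt hsum
  have hne : (T i).card ≠ 2 * (S ∩ T i).card := fun h =>
    Nat.not_odd_iff_even.mpr (even_two_mul _) (h ▸ hodd i hi)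
  exact ⟨i, hi, (Nat.le_of_lt_succ hlt).lt_of_ne hne⟩

theorem not_disjoint_of_card_lt_two_mul_card_inter {S₁ S₂ A : Finset α}
    (h₁ : A.card < 2 * (S₁ ∩ A).card) (h₂ : A.card < 2 * (S₂ ∩ A).card) :
    ¬ Disjoint S₁ S₂ := by
  have hmeet : ((S₁ ∩ A) ∩ (S₂ ∩ A)).Nonempty :=
    Finset.inter_nonempty_of_card_lt_card_add_card Finset.inter_subset_right
      Finset.inter_subset_right (by lia)
  exact Finset.not_disjoint_iff_nonempty_inter.mpr
    (hmeet.mono (Finset.inter_subset_inter Finset.inter_subset_left Finset.inter_subset_left))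

theorem majority_coloring_general {k : ℕ} (hodd : ∀ i ∈ I, Odd (T i).card)
    (hcard : ∑ i ∈ I, (T i).card < 2 * k + I.card) :
    (∀ S ⊆ I.biUnion T, S.card = k → ∃ i ∈ I, (T i).card < 2 * (S ∩ T i).card) ∧
    ∀ c : Finset α → ι,
      (∀ S ⊆ I.biUnion T, S.card = k → (T (c S)).card < 2 * (S ∩ T (c S)).card) →
      ∀ S₁ S₂ : Finset α, S₁ ⊆ I.biUnion T → S₂ ⊆ I.biUnion T →
        S₁.card = k → S₂.card = k → Disjoint S₁ S₂ → c S₁ ≠ c S₂ := by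
  refine ⟨fun S hS hk => exists_card_lt_two_mul_card_inter hodd hS (hk ▸ hcard), ?_⟩
  intro c hc S₁ S₂ hS₁ hS₂ hk₁ hk₂ hdisj hcolor
  exact not_disjoint_of_card_lt_two_mul_card_inter (hc S₁ hS₁ hk₁)
    (hcolor ▸ hc S₂ hS₂ hk₂) hdisj

end Majority

/-- Let `k ≥ 1`, `n ≥ 2k`, and suppose `[n] = {1,…,n}` is partitioned into pairwise
disjoint nonempty sets `T_1, …, T_{n-2k+2}`, each of odd cardinality.  Then for every
`k`-subset `S` of `[n]` there is an index `i` with `|S ∩ T_i| > |T_i|/2` (so the map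
`c` sending `S` to the least such `i` is well-defined), and any such map `c` is a
proper `(n-2k+2)`-coloring of the `(n,k)`-Kneser graph. -/
theorem majority_coloring (n k : ℕ) (hk : 1 ≤ k) (hn : 2 * k ≤ n)
    (T : ℕ → Finset ℕ)
    (hne : ∀ i ∈ Finset.Icc 1 (n - 2 * k + 2), (T i).Nonempty)
    (hodd : ∀ i ∈ Finset.Icc 1 (n - 2 * k + 2), Odd (T i).card)
    (hdisj : ∀ i ∈ Finset.Icc 1 (n - 2 * k + 2), ∀ j ∈ Finset.Icc 1 (n - 2 * k + 2),
      i ≠ j → Disjoint (T i) (T j))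
    (hcover : (Finset.Icc 1 (n - 2 * k + 2)).biUnion T = Finset.Icc 1 n) :
    (∀ S : Finset ℕ, S ⊆ Finset.Icc 1 n → S.card = k →
      ∃ i ∈ Finset.Icc 1 (n - 2 * k + 2), (T i).card < 2 * (S ∩ T i).card) ∧
    ∀ c : Finset ℕ → ℕ,
      (∀ S : Finset ℕ, S ⊆ Finset.Icc 1 n → S.card = k →
        c S ∈ Finset.Icc 1 (n - 2 * k + 2) ∧
        (T (c S)).card < 2 * (S ∩ T (c S)).card ∧
        ∀ j ∈ Finset.Icc 1 (n - 2 * k + 2), j < c S →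
          ¬ ((T j).card < 2 * (S ∩ T j).card)) →
      ∀ S₁ S₂ : Finset ℕ, S₁ ⊆ Finset.Icc 1 n → S₂ ⊆ Finset.Icc 1 n →
        S₁.card = k → S₂.card = k → Disjoint S₁ S₂ → c S₁ ≠ c S₂ := by
  have hcard : ∑ i ∈ Finset.Icc 1 (n - 2 * k + 2), (T i).card <
      2 * k + (Finset.Icc 1 (n - 2 * k + 2)).card := by
    rw [← Finset.card_biUnion hdisj, hcover, Nat.card_Icc, Nat.card_Icc]
    lia
  have hgeneral := majority_coloring_general hodd hcard
  rw [hcover] at hgeneral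
  exact ⟨hgeneral.1, fun c hc => hgeneral.2 c fun S hS hk => (hc S hS hk).2.1⟩
end
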